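/- Let a₁, a₂ ≠ 0 be real numbers whose ratio satisfies a₂/a₁ < 0 or a₂/a₁ > 4, and let s > −3/4. Then there exist b ∈ (1/2, 1), ε > 0 and C > 0, depending only on s, b and b', such that for all σ ≥ 0, all b' ∈ [b, b+ε), and all Schwartz functions f, g on ℝ²: ‖f · ∂_x g‖_{X_{a₂}^{σ,s,b'−1}} ≤ C ‖f‖_{X_{a₂}^{σ,s,b}} ‖g‖_{X_{a₁}^{σ,s,b}}. -/

import Mathlib

open MeasureTheory Set Filter
open scoped ENNReal

/-- Space-time Fourier transform `f̂(τ,ξ) = ∫∫ e^{-i(tτ + xξ)} f(t,x) dt dx`. -/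
noncomputable def FT2 (f : ℝ → ℝ → ℂ) (τ ξ : ℝ) : ℂ :=
  ∫ t : ℝ, ∫ x : ℝ, Complex.exp (-Complex.I * (t * τ + x * ξ)) * f t x

/-- Gevrey–Bourgain norm `‖f‖_{X_a^{σ,s,b}}`, valued in `ℝ≥0∞`. -/
noncomputable def XNorm (a σ s b : ℝ) (f : ℝ → ℝ → ℂ) : ℝ≥0∞ :=
  (∫⁻ τ : ℝ, ∫⁻ ξ : ℝ, ENNReal.ofReal
      (Real.exp (2 * σ * |ξ|) * (1 + |ξ|) ^ (2 * s) *
        (1 + |τ - a * ξ ^ 3|) ^ (2 * b) * ‖FT2 f τ ξ‖ ^ 2)) ^ (1/2 : ℝ)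

/-!
After a Fourier transform the estimate is an `L²` bound for a convolution with a multiplier. The
three modulations of an interaction, with output frequency `ξ` and frequency `ξ₁` of `g`, differ by
the resonance function, which with `r = a₂ / a₁` equals `a₁ ξ₁` times the quadratic form
`3 r (ξ - ξ₁ / 2)² + (r / 4 - 1) ξ₁²`. This form is definite exactly when `r < 0` or `r > 4`, so the
largest modulation is at least a multiple of `|ξ₁| N²`, where `N` is the largest frequency; this
pays for the derivative on `g` and, when `s > -3/4`, for the weights of negative order. The other
two modulations survive as decaying weights, and Cauchy–Schwarz, with the variable of the largest
modulation held fixed, leaves one-dimensional integrals to be bounded uniformly. They are evaluated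
by changing variables along the phase, whose derivative vanishes at no more than two points.
-/

section FourierTransform

open FourierTransform LineDeriv SchwartzMap

/-- A Schwartz function on `ℝ × ℝ` transported to `ℂ`, which serves as the Euclidean plane:
Mathlib's Fourier theory needs an inner product space, whereas `ℝ × ℝ` carries the sup norm. -/
noncomputable def planar (f : 𝓢(ℝ × ℝ, ℂ)) : 𝓢(ℂ, ℂ) :=
  compCLMOfContinuousLinearEquiv ℂ Complex.equivRealProdCLM f

/-- The point at which the inverse Fourier transform of Mathlib, whose kernel is `e^{2πi⟨v, w⟩}`,
has the kernel of `FT2` at the frequency `p = (τ, ξ)`. -/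
noncomputable def dualPoint (p : ℝ × ℝ) : ℂ :=
  (-(2 * Real.pi)⁻¹ : ℝ) • Complex.equivRealProdCLM.symm p

lemma planar_apply (f : 𝓢(ℝ × ℝ, ℂ)) (z : ℂ) : planar f z = f (z.re, z.im) := by
  simp [planar]

lemma dualPoint_sub (p q : ℝ × ℝ) : dualPoint (p - q) = dualPoint p - dualPoint q := by
  simp only [dualPoint, map_sub, smul_sub]

lemma continuous_dualPoint : Continuous dualPoint :=
  Complex.equivRealProdCLM.symm.continuous.fun_const_smul _

lemma integral_complex_eq_integral_prod {E : Type*} [NormedAddCommGroup E] [NormedSpace ℝ E]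
    (h : ℂ → E) : ∫ z, h z = ∫ p : ℝ × ℝ, h (Complex.equivRealProdCLM.symm p) :=
  (Complex.volume_preserving_equiv_real_prod.symm.integral_comp
    (MeasurableEquiv.measurableEmbedding _) h).symm

lemma integral_comp_dualPoint {E : Type*} [NormedAddCommGroup E] [NormedSpace ℝ E] (h : ℂ → E) :
    ∫ p, h (dualPoint p) = ((2 * Real.pi) ^ 2 : ℝ) • ∫ w, h w := by
  have hscale := Measure.integral_comp_smul volume h (-(2 * Real.pi)⁻¹)
  rw [integral_complex_eq_integral_prod, Complex.finrank_real_complex] at hscale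
  simpa [dualPoint, abs_of_pos Real.pi_pos, mul_pow] using hscale

lemma fourierInv_kernel_dualPoint (v : ℂ) (τ ξ : ℝ) :
    Complex.exp ((2 * Real.pi * inner ℝ v (dualPoint (τ, ξ)) : ℝ) * Complex.I) =
      Complex.exp (-Complex.I * (v.re * τ + v.im * ξ)) := by
  have hinner : inner ℝ v (Complex.equivRealProdCLM.symm (τ, ξ)) = v.re * τ + v.im * ξ := by
    simp only [Complex.equivRealProdCLM_symm_apply, Complex.inner, Complex.mul_re, Complex.add_re,
      Complex.ofReal_re, Complex.I_re, mul_zero, Complex.ofReal_im, Complex.I_im, mul_one, sub_self,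
      add_zero, Complex.conj_re, Complex.add_im, Complex.mul_im, zero_add, Complex.conj_im, mul_neg,
      sub_neg_eq_add]
    ring
  have hphase : 2 * Real.pi * inner ℝ v (dualPoint (τ, ξ)) = -(v.re * τ + v.im * ξ) := by
    rw [dualPoint, inner_smul_right, hinner]
    field_simp
  rw [hphase]
  push_cast
  ring_nf

lemma FT2_eq_fourierInv_planar (f : 𝓢(ℝ × ℝ, ℂ)) (τ ξ : ℝ) :
    FT2 (fun t x => f (t, x)) τ ξ = (𝓕⁻ (planar f)) (dualPoint (τ, ξ)) := by
  have hint : Integrable fun p : ℝ × ℝ => Complex.exp (-Complex.I * (p.1 * τ + p.2 * ξ)) * f p := by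
    refine (f.integrable (μ := volume)).bdd_mul (c := 1) (by fun_prop) (.of_forall fun p => ?_)
    simp [Complex.norm_exp]
  rw [fourierInv_coe, Real.fourierInv_eq']
  simp_rw [fourierInv_kernel_dualPoint, smul_eq_mul, planar_apply]
  rw [integral_complex_eq_integral_prod, FT2, ← integral_prod _ hint]
  simp [Measure.volume_eq_prod, Complex.equivRealProdCLM_symm_apply]

lemma continuous_FT2 (f : 𝓢(ℝ × ℝ, ℂ)) :
    Continuous fun p : ℝ × ℝ => FT2 (fun t x => f (t, x)) p.1 p.2 := by
  simp_rw [FT2_eq_fourierInv_planar]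
  exact (𝓕⁻ (planar f)).continuous.comp continuous_dualPoint

lemma planar_pairing_mul (f g : 𝓢(ℝ × ℝ, ℂ)) :
    planar (pairing (ContinuousLinearMap.mul ℂ ℂ) f g) =
      pairing (ContinuousLinearMap.mul ℂ ℂ) (planar f) (planar g) := by
  ext z
  simp [planar_apply]

lemma fourierInv_pairing_mul_dualPoint (F G : 𝓢(ℂ, ℂ)) (q : ℝ × ℝ) :
    (𝓕⁻ (pairing (ContinuousLinearMap.mul ℂ ℂ) F G)) (dualPoint q) =
      ((2 * Real.pi)⁻¹ ^ 2 : ℝ) •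
        ∫ p : ℝ × ℝ, (𝓕⁻ F) (dualPoint (q - p)) * (𝓕⁻ G) (dualPoint p) := by
  have hconv : 𝓕⁻ (pairing (ContinuousLinearMap.mul ℂ ℂ) F G) =
      SchwartzMap.convolution (ContinuousLinearMap.mul ℂ ℂ) (𝓕⁻ F) (𝓕⁻ G) := by
    simp [SchwartzMap.convolution]
  rw [hconv, convolution_apply, convolution_eq_swap]
  have hscale := integral_comp_dualPoint fun w => (𝓕⁻ F) (dualPoint q - w) * (𝓕⁻ G) w
  simp_rw [dualPoint_sub]
  rw [hscale, inv_pow, inv_smul_smul₀ (by positivity)]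
  rfl

lemma FT2_mul (f g : 𝓢(ℝ × ℝ, ℂ)) (τ ξ : ℝ) :
    FT2 (fun t x => f (t, x) * g (t, x)) τ ξ = ((2 * Real.pi)⁻¹ ^ 2 : ℝ) •
      ∫ p : ℝ × ℝ, FT2 (fun t x => f (t, x)) (τ - p.1) (ξ - p.2) *
        FT2 (fun t x => g (t, x)) p.1 p.2 := by
  have h := FT2_eq_fourierInv_planar (pairing (ContinuousLinearMap.mul ℂ ℂ) f g) τ ξ
  rw [planar_pairing_mul, fourierInv_pairing_mul_dualPoint] at h
  simp_rw [FT2_eq_fourierInv_planar]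
  exact h

lemma deriv_snd_eq_lineDerivOp (g : 𝓢(ℝ × ℝ, ℂ)) (t x : ℝ) :
    deriv (fun y => g (t, y)) x = (∂_{((0 : ℝ), (1 : ℝ))} g) (t, x) := by
  rw [lineDerivOp_apply, lineDeriv]
  have h := deriv_comp_const_add (f := fun y => g (t, y)) x 0
  simpa using h.symm

lemma planar_lineDerivOp (g : 𝓢(ℝ × ℝ, ℂ)) :
    planar (∂_{((0 : ℝ), (1 : ℝ))} g) = ∂_{Complex.I} (planar g) := by
  ext z
  simp [planar_apply, lineDerivOp_apply, lineDeriv]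

lemma inner_dualPoint_I (τ ξ : ℝ) :
    inner ℝ (dualPoint (τ, ξ)) Complex.I = -(2 * Real.pi)⁻¹ * ξ := by
  simp [dualPoint, Complex.inner, Complex.equivRealProdCLM_symm_apply]

lemma FT2_lineDerivOp (g : 𝓢(ℝ × ℝ, ℂ)) (τ ξ : ℝ) :
    FT2 (fun t x => (∂_{((0 : ℝ), (1 : ℝ))} g) (t, x)) τ ξ =
      Complex.I * ξ * FT2 (fun t x => g (t, x)) τ ξ := by
  have htemp : (fun x : ℂ => inner ℝ x Complex.I).HasTemperateGrowth := by fun_prop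
  rw [FT2_eq_fourierInv_planar, FT2_eq_fourierInv_planar, planar_lineDerivOp,
    fourierInv_lineDerivOp_eq, smul_apply, smulLeftCLM_apply_apply htemp, inner_dualPoint_I]
  simp only [smul_eq_mul, Complex.real_smul]
  push_cast
  field_simp

lemma enorm_FT2_mul_lineDerivOp_le (f g : 𝓢(ℝ × ℝ, ℂ)) (z : ℝ × ℝ) :
    ‖FT2 (fun t x => f (t, x) * (∂_{((0 : ℝ), (1 : ℝ))} g) (t, x)) z.1 z.2‖ₑ ≤
      ∫⁻ p : ℝ × ℝ, ‖FT2 (fun t x => f (t, x)) (z - p).1 (z - p).2‖ₑ *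
        (‖p.2‖ₑ * ‖FT2 (fun t x => g (t, x)) p.1 p.2‖ₑ) := by
  have hscale : ‖((2 * Real.pi)⁻¹ ^ 2 : ℝ)‖ₑ ≤ 1 := by
    have hinv : (2 * Real.pi)⁻¹ ≤ 1 := inv_le_one_of_one_le₀ (by linarith [Real.pi_gt_three])
    rw [Real.enorm_eq_ofReal (by positivity), ENNReal.ofReal_le_one]
    exact pow_le_one₀ (by positivity) hinv
  rw [FT2_mul, enorm_smul]
  refine (mul_le_of_le_one_left' hscale).trans
    ((enorm_integral_le_lintegral_enorm _).trans_eq (lintegral_congr fun p => ?_))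
  rw [FT2_lineDerivOp, enorm_mul, enorm_mul, enorm_mul]
  simp [← ofReal_norm]

end FourierTransform
section WeightedConvolution

lemma sq_eLpNorm_two {X : Type*} [MeasurableSpace X] (μ : Measure X) (f : X → ℝ≥0∞) :
    eLpNorm f 2 μ ^ 2 = ∫⁻ x, f x ^ 2 ∂μ := by
  simpa using eLpNorm_nnreal_pow_eq_lintegral (f := f) (μ := μ) (p := 2) two_ne_zero

lemma sq_lintegral_mul_le {X : Type*} [MeasurableSpace X] {μ : Measure X} {f g : X → ℝ≥0∞}
    (hf : AEMeasurable f μ) (hg : AEMeasurable g μ) :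
    (∫⁻ x, f x * g x ∂μ) ^ 2 ≤ (∫⁻ x, f x ^ 2 ∂μ) * ∫⁻ x, g x ^ 2 ∂μ := by
  have h := ENNReal.lintegral_mul_le_Lp_mul_Lq μ Real.HolderConjugate.two_two hf hg
  simp only [ENNReal.rpow_two, Pi.mul_apply] at h
  have hsq : ∀ a : ℝ≥0∞, (a ^ (1 / 2 : ℝ)) ^ 2 = a := fun a => by
    rw [← ENNReal.rpow_mul_natCast]; norm_num
  calc _ ≤ _ := pow_le_pow_left' h 2
    _ = _ := by rw [mul_pow, hsq, hsq]

lemma sq_eLpNorm_lintegral_mul_le {X Y : Type*} [MeasurableSpace X] [MeasurableSpace Y]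
    {μ : Measure X} {ν : Measure Y} [SFinite ν] {A B : X → Y → ℝ≥0∞}
    (hA : Measurable (Function.uncurry A)) (hB : ∀ x, Measurable (B x)) {K : ℝ≥0∞}
    (hK : ∀ x, ∫⁻ y, B x y ^ 2 ∂ν ≤ K ^ 2) {T : X → ℝ≥0∞}
    (hT : ∀ x, T x = ∫⁻ y, A x y * B x y ∂ν) :
    eLpNorm T 2 μ ^ 2 ≤ (∫⁻ x, ∫⁻ y, A x y ^ 2 ∂ν ∂μ) * K ^ 2 := by
  rw [sq_eLpNorm_two]
  calc ∫⁻ x, T x ^ 2 ∂μ ≤ ∫⁻ x, (∫⁻ y, A x y ^ 2 ∂ν) * K ^ 2 ∂μ := lintegral_mono fun x => by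
        rw [hT]
        exact (sq_lintegral_mul_le (by fun_prop) (hB x).aemeasurable).trans (by gcongr; exact hK x)
    _ = (∫⁻ x, ∫⁻ y, A x y ^ 2 ∂ν ∂μ) * K ^ 2 :=
        lintegral_mul_const _ (Measurable.lintegral_prod_right (by fun_prop))

variable {V : Type*} [MeasurableSpace V] [AddCommGroup V] [MeasurableAdd₂ V] [MeasurableNeg V]
  {μ : Measure V}

/-- The bilinear operator `(F, G) ↦ (z ↦ ∫ m(z, p) F(z - p) G(p) dp)`: the convolution of `F` and
`G` with a multiplier `m` inserted. -/
noncomputable def multiplierConv (μ : Measure V) (m : V → V → ℝ≥0∞) (F G : V → ℝ≥0∞) (z : V) :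
    ℝ≥0∞ :=
  ∫⁻ p, m z p * (F (z - p) * G p) ∂μ

variable {m : V → V → ℝ≥0∞} {F G : V → ℝ≥0∞}

lemma measurable_multiplierConv [SFinite μ] (hm : Measurable (Function.uncurry m))
    (hF : Measurable F) (hG : Measurable G) : Measurable (multiplierConv μ m F G) :=
  Measurable.lintegral_prod_right (by fun_prop)

lemma eLpNorm_multiplierConv_add_le [SFinite μ] {m' : V → V → ℝ≥0∞}
    (hm : Measurable (Function.uncurry m)) (hm' : Measurable (Function.uncurry m'))
    (hF : Measurable F) (hG : Measurable G) :
    eLpNorm (multiplierConv μ (fun z p => m z p + m' z p) F G) 2 μ ≤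
      eLpNorm (multiplierConv μ m F G) 2 μ + eLpNorm (multiplierConv μ m' F G) 2 μ := by
  have hadd : multiplierConv μ (fun z p => m z p + m' z p) F G =
      multiplierConv μ m F G + multiplierConv μ m' F G := funext fun z => by
    simp only [multiplierConv, Pi.add_apply, add_mul]
    exact lintegral_add_left (by fun_prop) _
  rw [hadd]
  exact eLpNorm_add_le (measurable_multiplierConv hm hF hG).aestronglyMeasurable
    (measurable_multiplierConv hm' hF hG).aestronglyMeasurable one_le_two

variable [μ.IsAddLeftInvariant]

lemma multiplierConv_swap [μ.IsNegInvariant] (z : V) :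
    multiplierConv μ m F G z = multiplierConv μ (fun z q => m z (z - q)) G F z := by
  rw [multiplierConv, ← lintegral_sub_left_eq_self _ z, multiplierConv]
  simp only [sub_sub_cancel, mul_comm]

variable [SFinite μ]

lemma lintegral_lintegral_conv (hF : Measurable F) (hG : Measurable G) :
    ∫⁻ z, ∫⁻ p, F (z - p) * G p ∂μ ∂μ = (∫⁻ z, F z ∂μ) * ∫⁻ p, G p ∂μ := by
  rw [lintegral_lintegral_swap (by fun_prop)]
  have hinner : ∀ p, ∫⁻ z, F (z - p) * G p ∂μ = (∫⁻ z, F z ∂μ) * G p := fun p => by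
    rw [lintegral_mul_const _ (by fun_prop), lintegral_sub_right_eq_self]
  simp_rw [hinner]
  rw [lintegral_const_mul _ hG]

variable {K : ℝ≥0∞}

lemma eLpNorm_multiplierConv_le_of_output (hm : Measurable (Function.uncurry m))
    (hF : Measurable F) (hG : Measurable G) (hK : ∀ z, ∫⁻ p, m z p ^ 2 ∂μ ≤ K ^ 2) :
    eLpNorm (multiplierConv μ m F G) 2 μ ≤ K * (eLpNorm F 2 μ * eLpNorm G 2 μ) := by
  rw [← ENNReal.pow_le_pow_left_iff two_ne_zero]
  calc eLpNorm (multiplierConv μ m F G) 2 μ ^ 2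
      ≤ (∫⁻ z, ∫⁻ p, (F (z - p) * G p) ^ 2 ∂μ ∂μ) * K ^ 2 :=
        sq_eLpNorm_lintegral_mul_le (by fun_prop) (fun z => by fun_prop) hK
          fun z => lintegral_congr fun p => mul_comm ..
    _ = (K * (eLpNorm F 2 μ * eLpNorm G 2 μ)) ^ 2 := by
        simp_rw [mul_pow, sq_eLpNorm_two]
        rw [lintegral_lintegral_conv (F := fun z => F z ^ 2) (G := fun z => G z ^ 2)
          (by fun_prop) (by fun_prop), mul_comm]

lemma eLpNorm_multiplierConv_le_of_right [μ.IsNegInvariant] (hm : Measurable (Function.uncurry m))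
    (hF : Measurable F) (hG : Measurable G) (hK : ∀ p, ∫⁻ z, m z p ^ 2 ∂μ ≤ K ^ 2) :
    eLpNorm (multiplierConv μ m F G) 2 μ ≤ K * (eLpNorm F 2 μ * eLpNorm G 2 μ) := by
  have hF_sq : ∀ z, ∫⁻ p, F (z - p) ^ 2 ∂μ ≤ eLpNorm F 2 μ ^ 2 := fun z => by
    rw [sq_eLpNorm_two, lintegral_sub_left_eq_self (fun q => F q ^ 2)]
  rw [← ENNReal.pow_le_pow_left_iff two_ne_zero]
  calc eLpNorm (multiplierConv μ m F G) 2 μ ^ 2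
      ≤ (∫⁻ z, ∫⁻ p, (m z p * G p) ^ 2 ∂μ ∂μ) * eLpNorm F 2 μ ^ 2 :=
        sq_eLpNorm_lintegral_mul_le (by fun_prop) (fun z => by fun_prop) hF_sq
          fun z => lintegral_congr fun p => by ring
    _ = (∫⁻ p, (∫⁻ z, m z p ^ 2 ∂μ) * G p ^ 2 ∂μ) * eLpNorm F 2 μ ^ 2 := by
        rw [lintegral_lintegral_swap (by fun_prop)]
        simp_rw [mul_pow]
        congr! 3 with p
        exact lintegral_mul_const _ (by fun_prop)
    _ ≤ (∫⁻ p, K ^ 2 * G p ^ 2 ∂μ) * eLpNorm F 2 μ ^ 2 := by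
        gcongr with p
        exact hK p
    _ = (K * (eLpNorm F 2 μ * eLpNorm G 2 μ)) ^ 2 := by
        rw [lintegral_const_mul _ (by fun_prop), ← sq_eLpNorm_two]
        ring

lemma eLpNorm_multiplierConv_le_of_left [μ.IsNegInvariant] (hm : Measurable (Function.uncurry m))
    (hF : Measurable F) (hG : Measurable G) (hK : ∀ q, ∫⁻ z, m z (z - q) ^ 2 ∂μ ≤ K ^ 2) :
    eLpNorm (multiplierConv μ m F G) 2 μ ≤ K * (eLpNorm F 2 μ * eLpNorm G 2 μ) := by
  rw [funext (multiplierConv_swap (μ := μ) (m := m)), mul_comm (eLpNorm F 2 μ)]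
  exact eLpNorm_multiplierConv_le_of_right (by fun_prop) hG hF hK

end WeightedConvolution
section ChangeOfVariables

lemma setLIntegral_abs_deriv_mul_comp_le {φ φ' : ℝ → ℝ} (hφ : ∀ x, HasDerivAt φ (φ' x) x)
    {S : Set ℝ} (hS : S.OrdConnected) (hne : ∀ x ∈ S, φ' x ≠ 0) (h : ℝ → ℝ≥0∞) :
    ∫⁻ x in S, ENNReal.ofReal |φ' x| * h (φ x) ≤ ∫⁻ y, h y := by
  have hne_of_lt : ∀ x ∈ S, ∀ y ∈ S, x < y → φ x ≠ φ y := fun x hx y hy hxy heq => by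
    obtain ⟨c, hc, hc0⟩ := exists_hasDerivAt_eq_zero hxy
      (fun z _ => (hφ z).continuousAt.continuousWithinAt) heq (fun z _ => hφ z)
    exact hne c (hS.out hx hy (Ioo_subset_Icc_self hc)) hc0
  have hinj : InjOn φ S := fun x hx y hy heq => by
    by_contra hxy
    rcases lt_or_gt_of_ne hxy with hlt | hlt
    exacts [hne_of_lt x hx y hy hlt heq, hne_of_lt y hy x hx hlt heq.symm]
  rw [← lintegral_image_eq_lintegral_abs_deriv_mul hS.measurableSet
    (fun x _ => (hφ x).hasDerivWithinAt) hinj]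
  exact setLIntegral_le_lintegral _ _

lemma setLIntegral_abs_deriv_mul_comp_le_card {φ φ' : ℝ → ℝ} (hφ : ∀ x, HasDerivAt φ (φ' x) x)
    (h : ℝ → ℝ≥0∞) (Z : Finset ℝ) {S : Set ℝ} (hS : S.OrdConnected)
    (hZ : ∀ x ∈ S, φ' x = 0 → x ∈ Z) :
    ∫⁻ x in S, ENNReal.ofReal |φ' x| * h (φ x) ≤ (Z.card + 1) * ∫⁻ y, h y := by
  induction Z using Finset.induction_on_max generalizing S with
  | empty => simpa using setLIntegral_abs_deriv_mul_comp_le hφ hS (by simpa using hZ) h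
  | insert a Z ha ih =>
    have ha_notMem : a ∉ Z := fun haZ => (ha a haZ).false
    have hleft : ∫⁻ x in S ∩ Iio a, ENNReal.ofReal |φ' x| * h (φ x) ≤
        (Z.card + 1) * ∫⁻ y, h y := by
      refine ih (hS.inter ordConnected_Iio) fun x hx h0 => ?_
      exact (Finset.mem_insert.1 (hZ x hx.1 h0)).resolve_left hx.2.ne
    have hright : ∫⁻ x in S ∩ Ioi a, ENNReal.ofReal |φ' x| * h (φ x) ≤ ∫⁻ y, h y := by
      refine setLIntegral_abs_deriv_mul_comp_le hφ (hS.inter ordConnected_Ioi) (fun x hx h0 => ?_) h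
      rcases Finset.mem_insert.1 (hZ x hx.1 h0) with rfl | hxZ
      exacts [self_notMem_Ioi hx.2, lt_asymm hx.2 (ha x hxZ)]
    have hcover : S ⊆ {a} ∪ ((S ∩ Iio a) ∪ (S ∩ Ioi a)) := fun x hx => by
      rcases lt_trichotomy x a with hxa | hxa | hxa <;> simp [hx, hxa]
    calc ∫⁻ x in S, ENNReal.ofReal |φ' x| * h (φ x)
        ≤ ∫⁻ x in {a} ∪ ((S ∩ Iio a) ∪ (S ∩ Ioi a)), ENNReal.ofReal |φ' x| * h (φ x) :=
          lintegral_mono_set hcover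
      _ ≤ 0 + ((Z.card + 1) * (∫⁻ y, h y) + ∫⁻ y, h y) := by
          refine (lintegral_union_le _ _ _).trans (add_le_add (by simp) ?_)
          exact (lintegral_union_le _ _ _).trans (add_le_add hleft hright)
      _ = ((insert a Z).card + 1) * ∫⁻ y, h y := by
          rw [Finset.card_insert_of_notMem ha_notMem]
          push_cast
          ring

/-- The weight `W` is dominated by `D |φ'|` except near the zeros of `φ'`: these all lie in `Z`, and
where domination fails `x` is within some `η` of `Z` and `W x ≤ D / η`. This is what makes
`∫ W(x) h(φ(x)) dx` bounded in terms of `‖h‖₁`, `‖h‖_∞`, `D` and the size of `Z` only. -/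
def DominatedByDeriv (φ' W : ℝ → ℝ) (D : ℝ) (Z : Finset ℝ) : Prop :=
  (∀ x, φ' x = 0 → x ∈ Z) ∧
    ∃ η > 0, ∀ x, W x ≤ D * |φ' x| ∨ ∃ z ∈ Z, |x - z| ≤ η ∧ W x * η ≤ D

lemma DominatedByDeriv.lintegral_mul_comp_le {φ φ' W : ℝ → ℝ} {D : ℝ} {Z : Finset ℝ}
    (hdom : DominatedByDeriv φ' W D Z) (hD : 0 ≤ D) (hφ : ∀ x, HasDerivAt φ (φ' x) x)
    {h : ℝ → ℝ≥0∞} (hh : ∀ y, h y ≤ 1) :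
    ∫⁻ x, ENNReal.ofReal (W x) * h (φ x) ≤
      ENNReal.ofReal D * ((Z.card + 1) * (∫⁻ y, h y) + 2 * Z.card) := by
  obtain ⟨hZ, η, hη, hW⟩ := hdom
  set A : Set ℝ := ⋃ z ∈ Z, Metric.closedBall z η
  have hA_meas : MeasurableSet A := Z.measurableSet_biUnion fun z _ => measurableSet_closedBall
  have hA_vol : volume A ≤ Z.card * ENNReal.ofReal (2 * η) :=
    (measure_biUnion_finset_le Z _).trans (by simp [Real.volume_closedBall])
  have hpointwise : ∀ x, ENNReal.ofReal (W x) * h (φ x) ≤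
      ENNReal.ofReal D * (ENNReal.ofReal |φ' x| * h (φ x)) +
        A.indicator (fun _ => ENNReal.ofReal (D / η)) x := fun x => by
    rcases hW x with hdom | ⟨z, hz, hxz, hWx⟩
    · refine le_add_of_le_left ?_
      rw [← mul_assoc, ← ENNReal.ofReal_mul hD]
      gcongr
    · refine le_add_of_le_right ?_
      have hxA : x ∈ A := mem_biUnion hz (by simpa [Real.dist_eq] using hxz)
      rw [indicator_of_mem hxA]
      exact (mul_le_of_le_one_right' (hh _)).trans
        (ENNReal.ofReal_le_ofReal ((le_div_iff₀ hη).2 hWx))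
  have hline := setLIntegral_abs_deriv_mul_comp_le_card hφ h Z ordConnected_univ fun x _ => hZ x
  rw [setLIntegral_univ] at hline
  calc ∫⁻ x, ENNReal.ofReal (W x) * h (φ x)
      ≤ ENNReal.ofReal D * (∫⁻ x, ENNReal.ofReal |φ' x| * h (φ x)) +
          ENNReal.ofReal (D / η) * volume A := by
        refine (lintegral_mono hpointwise).trans_eq ?_
        rw [lintegral_add_right _ (measurable_const.indicator hA_meas),
          lintegral_const_mul' _ _ ENNReal.ofReal_ne_top, lintegral_indicator_const hA_meas]
    _ ≤ ENNReal.ofReal D * ((Z.card + 1) * ∫⁻ y, h y) +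
          ENNReal.ofReal (D / η) * (Z.card * ENNReal.ofReal (2 * η)) := by gcongr
    _ = ENNReal.ofReal D * ((Z.card + 1) * (∫⁻ y, h y) + 2 * Z.card) := by
        have hcancel : ENNReal.ofReal (D / η) * ENNReal.ofReal (2 * η) = ENNReal.ofReal D * 2 := by
          rw [← ENNReal.ofReal_mul (by positivity), show D / η * (2 * η) = D * 2 by field_simp,
            ENNReal.ofReal_mul hD, ENNReal.ofReal_ofNat]
        rw [mul_left_comm (ENNReal.ofReal (D / η)), hcancel]
        ring

lemma lintegral_prod_mul_translates_le {α β φ' W : ℝ → ℝ} {D : ℝ} {Z : Finset ℝ} {n : ℕ}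
    (hdom : DominatedByDeriv φ' W D Z) (hn : Z.card ≤ n) (hD : 0 ≤ D) (hW : Measurable W)
    (hα : Measurable α) (hβ : Measurable β) (hφ : ∀ x, HasDerivAt (fun x => α x - β x) (φ' x) x)
    {J : ℝ → ℝ≥0∞} (hJ : Measurable J) (hJ_le : ∀ y, J y ≤ 1) :
    ∫⁻ p : ℝ × ℝ, ENNReal.ofReal (W p.2) * (J (p.1 - α p.2) * J (p.1 - β p.2)) ≤
      (∫⁻ y, J y) * (ENNReal.ofReal D * ((n + 1) * (∫⁻ y, J y) + 2 * n)) := by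
  have hshift : ∀ x, ∫⁻ t, ENNReal.ofReal (W x) * (J (t - α x) * J (t - β x)) =
      ∫⁻ t, ENNReal.ofReal (W x) * (J t * J (t + (α x - β x))) := fun x => by
    rw [← lintegral_add_right_eq_self _ (α x)]
    simp only [add_sub_cancel_right, add_sub_assoc]
  have hinner : ∀ t, ∫⁻ x, ENNReal.ofReal (W x) * (J t * J (t + (α x - β x))) ≤
      J t * (ENNReal.ofReal D * ((n + 1) * (∫⁻ y, J y) + 2 * n)) := fun t => by
    have h := hdom.lintegral_mul_comp_le hD hφ fun y => hJ_le (t + y)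
    rw [lintegral_add_left_eq_self] at h
    simp_rw [mul_left_comm _ (J t)]
    rw [lintegral_const_mul _ (by fun_prop)]
    gcongr
    exact h.trans (by gcongr)
  rw [Measure.volume_eq_prod, lintegral_prod_symm' _ (by fun_prop)]
  simp_rw [hshift]
  rw [lintegral_lintegral_swap (by fun_prop), ← lintegral_mul_const _ hJ]
  exact lintegral_mono hinner

end ChangeOfVariables
section Weights

lemma sq_one_add_add_le_mul {h p q M : ℝ} (hh : 1 ≤ h) (hM : 1 ≤ M) (hp : 1 ≤ h * p)
    (hq : 1 ≤ h * q) (hpq : |p - q| ≤ M * h ^ 2) : (1 + p + q) ^ 2 ≤ 12 * M * (h ^ 3 * p * q) := by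
  wlog hle : p ≤ q generalizing p q
  · have := this hq hp (by rwa [abs_sub_comm]) (le_of_not_ge hle)
    linarith
  have hp0 : 0 < p := pos_of_mul_pos_right (one_pos.trans_le hp) (by linarith)
  have hq0 : 0 < q := hp0.trans_le hle
  have hMh : 1 ≤ M * h ^ 2 := one_le_mul_of_one_le_of_one_le hM (one_le_pow₀ hh)
  rcases le_total q 1 with hq1 | hq1
  · have hprod : 1 ≤ h * p * (h * q) := one_le_mul_of_one_le_of_one_le hp hq
    have hMh1 : 1 ≤ M * h := one_le_mul_of_one_le_of_one_le hM hh
    calc (1 + p + q) ^ 2 ≤ 3 ^ 2 := by gcongr; linarith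
      _ ≤ 12 * (M * h * (h * p * (h * q))) := by
        linarith [one_le_mul_of_one_le_of_one_le hMh1 hprod]
      _ = 12 * M * (h ^ 3 * p * q) := by ring
  · have h_absorb : p + M * h ^ 2 ≤ 2 * (M * h ^ 2 * (h * p)) := by
      have : p ≤ h * p := le_mul_of_one_le_left hp0.le hh
      have : h * p ≤ M * h ^ 2 * (h * p) := le_mul_of_one_le_left (by linarith) hMh
      have : M * h ^ 2 ≤ M * h ^ 2 * (h * p) := le_mul_of_one_le_right (by linarith) hp
      linarith
    calc (1 + p + q) ^ 2 = (1 + p + q) * (1 + p + q) := sq _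
      _ ≤ (3 * q) * (2 * (p + M * h ^ 2)) := by
        gcongr
        · linarith
        · linarith [neg_le_of_abs_le hpq]
      _ ≤ (3 * q) * (2 * (2 * (M * h ^ 2 * (h * p)))) := by gcongr
      _ = 12 * M * (h ^ 3 * p * q) := by ring

-- In this section `X = |x|` and `Y = |y|`, while `p` and `q` stand for the distances of `x` from
-- two fixed multiples `α y` and `β y` of `y`; the scale separating near from far is `1 / h`.
section TwoPoints

variable {K X Y p q h k : ℝ}

lemma sq_one_add_add_le_of_near (hK : 1 ≤ K) (hX : 0 ≤ X) (hY : 0 ≤ Y) (hk : 1 ≤ k) (hh : 1 ≤ h)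
    (hhY : h ^ 2 = 1 + Y) (hkmin : min (1 + X) (1 + Y) ≤ k ^ 2) (hp : h * p ≤ 1)
    (hXY : X ≤ p + K * Y) (hYX : Y ≤ K * (p + X)) :
    (1 + X + Y) ^ 2 ≤ 8 * K ^ 3 * (K + 1) ^ 2 * (h * k ^ 3) := by
  have hp1 : p ≤ 1 := by nlinarith
  have h_le_k : h ≤ 2 * K * k := by
    have hsq : h ^ 2 ≤ 2 * K * k ^ 2 := by
      rcases min_le_iff.1 hkmin with hmin | hmin <;> nlinarith
    exact le_of_sq_le_sq (by nlinarith) (by positivity)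
  calc (1 + X + Y) ^ 2 ≤ ((K + 1) * h ^ 2) ^ 2 := by
        gcongr
        rw [hhY]
        nlinarith
    _ = (K + 1) ^ 2 * h * h ^ 3 := by ring
    _ ≤ (K + 1) ^ 2 * h * (2 * K * k) ^ 3 := by gcongr
    _ = 8 * K ^ 3 * (K + 1) ^ 2 * (h * k ^ 3) := by ring

lemma sq_one_add_add_le_of_far (hK : 1 ≤ K) (hX : 0 ≤ X) (hY : 0 ≤ Y) (hk : 1 ≤ k) (hh : 1 ≤ h)
    (hhY : h ^ 2 = 1 + Y) (hkmin : min (1 + X) (1 + Y) ≤ k ^ 2) (hp : 1 ≤ h * p) (hq : 1 ≤ h * q)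
    (hXp : X ≤ p + K * Y) (hYp : Y ≤ K * (p + X)) (hYq : Y ≤ K * (q + X)) (hYpq : Y ≤ K * (p + q))
    (hpq : |p - q| ≤ K * Y) :
    (1 + X + Y) ^ 2 ≤ 1000 * K ^ 8 * (k ^ 3 * p * q) := by
  have hp0 : 0 < p := pos_of_mul_pos_right (one_pos.trans_le hp) (by linarith)
  have hq0 : 0 < q := pos_of_mul_pos_right (one_pos.trans_le hq) (by linarith)
  rcases le_total (h ^ 2) (4 * K * k ^ 2) with hcomparable | hsmall
  · have h_le_k : h ≤ 2 * K * k := le_of_sq_le_sq (by nlinarith) (by positivity)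
    calc (1 + X + Y) ^ 2 ≤ (3 * K ^ 2 * (1 + p + q)) ^ 2 := by
          gcongr
          nlinarith [mul_nonneg (mul_nonneg (by linarith : 0 ≤ K) (by linarith : 0 ≤ K - 1))
            (by linarith : 0 ≤ p + q)]
      _ = 9 * K ^ 4 * (1 + p + q) ^ 2 := by ring
      _ ≤ 9 * K ^ 4 * (12 * K * (h ^ 3 * p * q)) := by
          gcongr
          exact sq_one_add_add_le_mul hh hK hp hq (hpq.trans (by gcongr; linarith))
      _ ≤ 9 * K ^ 4 * (12 * K * ((2 * K * k) ^ 3 * p * q)) := by gcongr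
      _ ≤ 1000 * K ^ 8 * (k ^ 3 * p * q) := by
          have : 0 ≤ K ^ 8 * (k ^ 3 * p * q) := by positivity
          linarith
  · have hXk : 1 + X ≤ k ^ 2 := (min_le_iff.1 hkmin).resolve_right (by nlinarith)
    have hhp : h ^ 2 ≤ 2 * K * p := by nlinarith
    have hhq : h ^ 2 ≤ 2 * K * q := by nlinarith
    have hXh : 1 + X + Y ≤ 2 * h ^ 2 := by nlinarith
    calc (1 + X + Y) ^ 2 ≤ (2 * h ^ 2) ^ 2 := by gcongr
      _ = 4 * (h ^ 2 * h ^ 2) := by ring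
      _ ≤ 4 * ((2 * K * p) * (2 * K * q)) := by gcongr
      _ = 16 * (K ^ 2 * (1 * p * q)) := by ring
      _ ≤ 1000 * (K ^ 8 * (k ^ 3 * p * q)) := by
          gcongr
          · norm_num
          · norm_num
          · exact one_le_pow₀ hk
      _ = 1000 * K ^ 8 * (k ^ 3 * p * q) := by ring

end TwoPoints

lemma abs_le_abs_sub_mul_add {α K : ℝ} (hK : |α| ≤ K) (x y : ℝ) :
    |x| ≤ |x - α * y| + K * |y| :=
  calc |x| = |x - α * y + α * y| := by rw [sub_add_cancel]
    _ ≤ |x - α * y| + |α * y| := abs_add_le _ _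
    _ ≤ |x - α * y| + K * |y| := by rw [abs_mul]; gcongr

lemma abs_le_mul_abs_sub_mul_add {α K : ℝ} (hα : α ≠ 0) (hK : |α|⁻¹ ≤ K) (x y : ℝ) :
    |y| ≤ K * (|x - α * y| + |x|) :=
  calc |y| = |α|⁻¹ * |x - (x - α * y)| := by
        rw [sub_sub_cancel, abs_mul, inv_mul_cancel_left₀ (abs_ne_zero.2 hα)]
    _ ≤ |α|⁻¹ * (|x - α * y| + |x|) := by
        gcongr
        exact (abs_sub _ _).trans_eq (add_comm _ _)
    _ ≤ K * (|x - α * y| + |x|) := by gcongr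

lemma abs_le_mul_abs_sub_add_abs_sub {α β K : ℝ} (hαβ : α ≠ β) (hK : |α - β|⁻¹ ≤ K) (x y : ℝ) :
    |y| ≤ K * (|x - α * y| + |x - β * y|) := by
  have h := abs_le_mul_abs_sub_mul_add (sub_ne_zero.2 hαβ) hK (x - β * y) y
  rwa [show x - β * y - (α - β) * y = x - α * y by ring] at h

lemma abs_abs_sub_sub_abs_sub_le {α β K : ℝ} (hK : |α - β| ≤ K) (x y : ℝ) :
    |(|x - α * y| - |x - β * y|)| ≤ K * |y| :=
  calc |(|x - α * y| - |x - β * y|)| ≤ |x - α * y - (x - β * y)| := abs_abs_sub_abs_le _ _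
    _ = |α - β| * |y| := by rw [← abs_mul, ← abs_neg]; ring_nf
    _ ≤ K * |y| := by gcongr

lemma one_le_sqrt_one_add_abs (x : ℝ) : 1 ≤ √(1 + |x|) :=
  Real.one_le_sqrt.2 (by linarith [abs_nonneg x])

lemma one_le_sqrt_min_one_add_abs (x y : ℝ) : 1 ≤ √(min (1 + |x|) (1 + |y|)) :=
  Real.one_le_sqrt.2 (by simp)

lemma sq_sqrt_min_one_add_abs (x y : ℝ) :
    √(min (1 + |x|) (1 + |y|)) ^ 2 = min (1 + |x|) (1 + |y|) :=
  Real.sq_sqrt (by positivity)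

section TwoLines

variable {α β K w x y : ℝ}

lemma mul_inv_sqrt_le_of_near (hK : 1 ≤ K) (hα : α ≠ 0) (hKα : |α| ≤ K) (hKα' : |α|⁻¹ ≤ K)
    (hw : w * √(min (1 + |x|) (1 + |y|)) ^ 3 ≤ 2 * (1 + |x| + |y|) ^ 2)
    (hx : √(1 + |y|) * |x - α * y| ≤ 1) :
    w * (√(1 + |y|))⁻¹ ≤ 16 * K ^ 3 * (K + 1) ^ 2 := by
  have hk := one_le_sqrt_min_one_add_abs x y
  have hbound := sq_one_add_add_le_of_near hK (abs_nonneg x) (abs_nonneg y) hk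
    (one_le_sqrt_one_add_abs y) (Real.sq_sqrt (by positivity)) (sq_sqrt_min_one_add_abs x y).ge hx
    (abs_le_abs_sub_mul_add hKα x y) (abs_le_mul_abs_sub_mul_add hα hKα' x y)
  have hwh : w ≤ 16 * K ^ 3 * (K + 1) ^ 2 * √(1 + |y|) :=
    le_of_mul_le_mul_right (by linarith) (by positivity : 0 < √(min (1 + |x|) (1 + |y|)) ^ 3)
  rwa [← div_eq_mul_inv, div_le_iff₀ (by positivity)]

lemma le_mul_abs_sub_mul_abs_sub_of_far (hK : 1 ≤ K) (hα : α ≠ 0) (hKα : |α| ≤ K)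
    (hKα' : |α|⁻¹ ≤ K) (hβ : β ≠ 0) (hKβ' : |β|⁻¹ ≤ K) (hαβ : α ≠ β) (hKαβ : |α - β| ≤ K)
    (hKαβ' : |α - β|⁻¹ ≤ K)
    (hw : w * √(min (1 + |x|) (1 + |y|)) ^ 3 ≤ 2 * (1 + |x| + |y|) ^ 2)
    (hxα : 1 ≤ √(1 + |y|) * |x - α * y|) (hxβ : 1 ≤ √(1 + |y|) * |x - β * y|) :
    w ≤ 2000 * K ^ 8 * (|x - α * y| * |x - β * y|) := by
  have hk := one_le_sqrt_min_one_add_abs x y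
  have hbound := sq_one_add_add_le_of_far hK (abs_nonneg x) (abs_nonneg y) hk
    (one_le_sqrt_one_add_abs y) (Real.sq_sqrt (by positivity)) (sq_sqrt_min_one_add_abs x y).ge
    hxα hxβ (abs_le_abs_sub_mul_add hKα x y) (abs_le_mul_abs_sub_mul_add hα hKα' x y)
    (abs_le_mul_abs_sub_mul_add hβ hKβ' x y) (abs_le_mul_abs_sub_add_abs_sub hαβ hKαβ' x y)
    (abs_abs_sub_sub_abs_sub_le hKαβ x y)
  exact le_of_mul_le_mul_right (by linarith) (by positivity : 0 < √(min (1 + |x|) (1 + |y|)) ^ 3)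

end TwoLines

lemma exists_dominatedByDeriv_of_two_zeros {α β c : ℝ} (hα : α ≠ 0) (hβ : β ≠ 0) (hαβ : α ≠ β)
    (hc : 0 < c) :
    ∃ D > 0, ∀ (y : ℝ) (ψ W : ℝ → ℝ), (∀ x, c * (|x - α * y| * |x - β * y|) ≤ |ψ x|) →
      (∀ x, W x * √(min (1 + |x|) (1 + |y|)) ^ 3 ≤ 2 * (1 + |x| + |y|) ^ 2) →
      DominatedByDeriv ψ W D {α * y, β * y} := by
  obtain ⟨K, hK, hKα, hKβ, hKαβ, hKα', hKβ', hKαβ'⟩ :=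
    ((eventually_ge_atTop 1).and <| (eventually_ge_atTop |α|).and <|
      (eventually_ge_atTop |β|).and <| (eventually_ge_atTop |α - β|).and <|
      (eventually_ge_atTop |α|⁻¹).and <| (eventually_ge_atTop |β|⁻¹).and <|
      eventually_ge_atTop |α - β|⁻¹).exists
  refine ⟨max (16 * K ^ 3 * (K + 1) ^ 2) (2000 * K ^ 8 / c), by positivity,
    fun y ψ W hψ hW => ⟨fun x hx => ?_, (√(1 + |y|))⁻¹, by positivity, fun x => ?_⟩⟩
  · have hzero : |x - α * y| * |x - β * y| = 0 :=
      le_antisymm (nonpos_of_mul_nonpos_right (by simpa [hx] using hψ x) hc) (by positivity)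
    simpa [sub_eq_zero] using hzero
  have hη : ∀ r, √(1 + |y|) * r ≤ 1 → r ≤ (√(1 + |y|))⁻¹ := fun r hr => by
    rwa [← one_div, le_div_iff₀' (by positivity)]
  rcases le_total (√(1 + |y|) * |x - α * y|) 1 with hxα | hxα
  · exact .inr ⟨α * y, by simp, hη _ hxα,
      (mul_inv_sqrt_le_of_near hK hα hKα hKα' (hW x) hxα).trans (le_max_left ..)⟩
  rcases le_total (√(1 + |y|) * |x - β * y|) 1 with hxβ | hxβ
  · exact .inr ⟨β * y, by simp, hη _ hxβ,
      (mul_inv_sqrt_le_of_near hK hβ hKβ hKβ' (hW x) hxβ).trans (le_max_left ..)⟩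
  left
  calc W x ≤ 2000 * K ^ 8 * (|x - α * y| * |x - β * y|) :=
        le_mul_abs_sub_mul_abs_sub_of_far hK hα hKα hKα' hβ hKβ' hαβ hKαβ hKαβ' (hW x) hxα hxβ
    _ = 2000 * K ^ 8 / c * (c * (|x - α * y| * |x - β * y|)) := by field_simp
    _ ≤ 2000 * K ^ 8 / c * |ψ x| := by gcongr; exact hψ x
    _ ≤ _ := by gcongr; exact le_max_right ..

/-- The weight `|ξ₁| (1 + |ξ₁| + |ξ - ξ₁|) / (1 + |ξ|)^{3/2}`: the square of the part of the symbol
of `f ∂ₓg` at output frequency `ξ` and frequency `ξ₁` of `g` that is left over once the resonance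
identity has been spent. -/
noncomputable def interactionWeight (ξ ξ₁ : ℝ) : ℝ :=
  |ξ₁| * (1 + |ξ₁| + |ξ - ξ₁|) / √(1 + |ξ|) ^ 3

lemma measurable_interactionWeight : Measurable (Function.uncurry interactionWeight) := by
  unfold interactionWeight Function.uncurry
  fun_prop

lemma interactionWeight_mul_sqrt_min_pow_le {x y ξ ξ₁ : ℝ} (hξ : min (1 + |x|) (1 + |y|) ≤ 1 + |ξ|)
    (hξ₁ : |ξ₁| ≤ |x| + |y|) (hsum : |ξ₁| + |ξ - ξ₁| ≤ 2 * (|x| + |y|)) :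
    interactionWeight ξ ξ₁ * √(min (1 + |x|) (1 + |y|)) ^ 3 ≤ 2 * (1 + |x| + |y|) ^ 2 :=
  calc interactionWeight ξ ξ₁ * √(min (1 + |x|) (1 + |y|)) ^ 3
      ≤ interactionWeight ξ ξ₁ * √(1 + |ξ|) ^ 3 := by
        unfold interactionWeight
        gcongr
    _ = |ξ₁| * (1 + (|ξ₁| + |ξ - ξ₁|)) := by
        rw [interactionWeight, div_mul_cancel₀ _ (by positivity), add_assoc]
    _ ≤ (1 + |x| + |y|) * (2 * (1 + |x| + |y|)) := by gcongr <;> linarith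
    _ = 2 * (1 + |x| + |y|) ^ 2 := by ring

section Phases

variable {a₁ a₂ : ℝ}

lemma exists_mul_abs_sub_mul_abs_add_le (ha₁ : a₁ ≠ 0) (hratio : a₂ / a₁ < 0 ∨ 1 < a₂ / a₁) :
    ∃ κ > 1, ∃ c > 0, ∀ u v : ℝ, c * (|u - κ * v| * |u + κ * v|) ≤ |a₁ * u ^ 2 - a₂ * v ^ 2| := by
  have ha₂ : a₂ = a₂ / a₁ * a₁ := (div_mul_cancel₀ a₂ ha₁).symm
  generalize a₂ / a₁ = r at hratio ha₂
  have hfactor : ∀ u v, |a₁ * u ^ 2 - a₂ * v ^ 2| = |a₁| * |u ^ 2 - r * v ^ 2| := fun u v => by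
    rw [← abs_mul, ha₂]
    ring_nf
  rcases hratio with hneg | hgt
  · refine ⟨2, one_lt_two, |a₁| * min 1 (-r / 4),
      mul_pos (abs_pos.2 ha₁) (lt_min one_pos (by linarith)), fun u v => ?_⟩
    have hprod : |u - 2 * v| * |u + 2 * v| ≤ u ^ 2 + 4 * v ^ 2 := by
      rw [← abs_mul, abs_le]
      constructor <;> nlinarith [sq_nonneg u, sq_nonneg v]
    rw [hfactor, mul_assoc]
    gcongr
    calc min 1 (-r / 4) * (|u - 2 * v| * |u + 2 * v|)
        ≤ min 1 (-r / 4) * (u ^ 2 + 4 * v ^ 2) :=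
          mul_le_mul_of_nonneg_left hprod (le_min zero_le_one (by linarith))
      _ = min 1 (-r / 4) * u ^ 2 + min 1 (-r / 4) * (4 * v ^ 2) := mul_add ..
      _ ≤ 1 * u ^ 2 + -r / 4 * (4 * v ^ 2) := by
          gcongr
          exacts [min_le_left .., min_le_right ..]
      _ = u ^ 2 - r * v ^ 2 := by ring
      _ ≤ |u ^ 2 - r * v ^ 2| := le_abs_self _
  · refine ⟨√r, Real.lt_sqrt_of_sq_lt (by linarith), |a₁|, abs_pos.2 ha₁, fun u v => ?_⟩
    have hsq : √r ^ 2 = r := Real.sq_sqrt (by linarith)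
    have hprod : (u - √r * v) * (u + √r * v) = u ^ 2 - r * v ^ 2 := by
      linear_combination -v ^ 2 * hsq
    rw [hfactor, ← abs_mul, hprod]

lemma exists_dominatedByDeriv_output (ha₁ : a₁ ≠ 0) (hratio : a₂ / a₁ < 0 ∨ 1 < a₂ / a₁) :
    ∃ D > 0, ∀ y, ∃ Z : Finset ℝ, Z.card ≤ 2 ∧
      DominatedByDeriv (fun x => 3 * (a₁ * x ^ 2 - a₂ * (y - x) ^ 2))
        (interactionWeight y) D Z := by
  obtain ⟨κ, hκ, c, hc, hlower⟩ := exists_mul_abs_sub_mul_abs_add_le ha₁ hratio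
  have hκ_sub : 0 < κ - 1 := by linarith
  have hne : κ / (κ + 1) ≠ κ / (κ - 1) := by
    rw [Ne, div_eq_div_iff (by positivity) hκ_sub.ne']
    nlinarith
  obtain ⟨D, hD, hdom⟩ := exists_dominatedByDeriv_of_two_zeros (α := κ / (κ + 1))
    (β := κ / (κ - 1)) (c := 3 * (c * ((κ + 1) * (κ - 1)))) (by positivity) (by positivity) hne
    (by positivity)
  refine ⟨D, hD, fun y => ⟨_, Finset.card_le_two, hdom y _ _ (fun x => ?_) fun x => ?_⟩⟩
  · have hα : |x - κ * (y - x)| = (κ + 1) * |x - κ / (κ + 1) * y| := by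
      rw [show x - κ * (y - x) = (κ + 1) * (x - κ / (κ + 1) * y) by field_simp; ring, abs_mul,
        abs_of_pos (by positivity)]
    have hβ : |x + κ * (y - x)| = (κ - 1) * |x - κ / (κ - 1) * y| := by
      rw [show x + κ * (y - x) = -((κ - 1) * (x - κ / (κ - 1) * y)) by field_simp; ring, abs_neg,
        abs_mul, abs_of_pos hκ_sub]
    have h := hlower x (y - x)
    rw [hα, hβ] at h
    rw [abs_mul, abs_of_pos (zero_lt_three' ℝ)]
    linarith
  · refine interactionWeight_mul_sqrt_min_pow_le (min_le_right _ _) ?_ ?_ <;>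
    linarith [abs_nonneg y, abs_sub y x]

lemma exists_dominatedByDeriv_left (ha₁ : a₁ ≠ 0) (hratio : a₂ / a₁ < 0 ∨ 1 < a₂ / a₁) :
    ∃ D > 0, ∀ y, ∃ Z : Finset ℝ, Z.card ≤ 2 ∧
      DominatedByDeriv (fun x => 3 * (a₂ * x ^ 2 - a₁ * (x - y) ^ 2))
        (fun x => interactionWeight x (x - y)) D Z := by
  obtain ⟨κ, hκ, c, hc, hlower⟩ := exists_mul_abs_sub_mul_abs_add_le ha₁ hratio
  have hκ_sub : 0 < κ - 1 := by linarith
  have hneg : -(κ - 1)⁻¹ < 0 := neg_neg_of_pos (by positivity)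
  have hpos : 0 < (κ + 1)⁻¹ := by positivity
  obtain ⟨D, hD, hdom⟩ := exists_dominatedByDeriv_of_two_zeros (c := 3 * (c * ((κ - 1) * (κ + 1))))
    hneg.ne hpos.ne' (hneg.trans hpos).ne (by positivity)
  refine ⟨D, hD, fun y => ⟨_, Finset.card_le_two, hdom y _ _ (fun x => ?_) fun x => ?_⟩⟩
  · have hα : |x - y + κ * x| = (κ + 1) * |x - (κ + 1)⁻¹ * y| := by
      rw [show x - y + κ * x = (κ + 1) * (x - (κ + 1)⁻¹ * y) by field_simp; ring, abs_mul,
        abs_of_pos (by positivity)]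
    have hβ : |x - y - κ * x| = (κ - 1) * |x - -(κ - 1)⁻¹ * y| := by
      rw [show x - y - κ * x = -((κ - 1) * (x - -(κ - 1)⁻¹ * y)) by field_simp; ring, abs_neg,
        abs_mul, abs_of_pos hκ_sub]
    have h := hlower (x - y) x
    rw [hα, hβ] at h
    rw [abs_mul, abs_of_pos (zero_lt_three' ℝ), abs_sub_comm (a₂ * x ^ 2)]
    linarith
  · refine interactionWeight_mul_sqrt_min_pow_le (min_le_left _ _) ?_ ?_ <;>
    linarith [abs_nonneg x, abs_nonneg y, abs_sub x y, congrArg abs (sub_sub_cancel x y)]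

section Midpoint

variable {x y : ℝ}

lemma interactionWeight_le_of_mul_cube {B : ℝ}
    (h : 1 + |y| + |x - y| ≤ B * √(1 + |x|) ^ 3) : interactionWeight x y ≤ |y| * B := by
  rw [interactionWeight, mul_div_assoc]
  gcongr
  exact (div_le_iff₀ (by positivity)).2 h

lemma abs_sub_le_abs_sub_half_add : |x - y| ≤ |x - y / 2| + |y| / 2 := by
  have h := abs_sub_abs_le_abs_sub (x - y) (x - y / 2)
  rw [show x - y - (x - y / 2) = -(y / 2) by ring, abs_neg, abs_div, abs_two] at h
  linarith

lemma abs_half_le_abs_sub_half_add : |y| / 2 ≤ |x - y / 2| + |x| := by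
  have h := abs_sub_abs_le_abs_sub (y / 2) x
  rw [abs_sub_comm, abs_div, abs_two] at h
  linarith

lemma interactionWeight_mul_le_of_near_half (h : √(1 + |y|) * |x - y / 2| ≤ 1) :
    interactionWeight x y * (√(1 + |y|))⁻¹ ≤ 16 := by
  have hk_sq : √(1 + |x|) ^ 2 = 1 + |x| := Real.sq_sqrt (by positivity)
  have hh_sq : √(1 + |y|) ^ 2 = 1 + |y| := Real.sq_sqrt (by positivity)
  have hp : |x - y / 2| ≤ 1 :=
    (le_mul_of_one_le_left (abs_nonneg _) (one_le_sqrt_one_add_abs y)).trans h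
  have h_le_k : √(1 + |y|) ≤ 2 * √(1 + |x|) := by
    refine le_of_sq_le_sq ?_ (by positivity)
    linarith [abs_half_le_abs_sub_half_add (x := x) (y := y), abs_nonneg x]
  have hW : interactionWeight x y ≤ |y| * (16 / √(1 + |y|)) := by
    refine interactionWeight_le_of_mul_cube ?_
    calc 1 + |y| + |x - y| ≤ 2 * √(1 + |y|) ^ 2 := by
          linarith [abs_sub_le_abs_sub_half_add (x := x) (y := y), abs_nonneg y]
      _ = 16 / √(1 + |y|) * (√(1 + |y|) / 2) ^ 3 := by field_simp; norm_num
      _ ≤ 16 / √(1 + |y|) * √(1 + |x|) ^ 3 := by gcongr; linarith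
  calc interactionWeight x y * (√(1 + |y|))⁻¹
      ≤ √(1 + |y|) ^ 2 * (16 / √(1 + |y|)) * (√(1 + |y|))⁻¹ := by
        gcongr
        refine hW.trans ?_
        gcongr
        linarith
    _ = 16 := by field_simp

lemma interactionWeight_le_of_far_half (h : 1 ≤ √(1 + |y|) * |x - y / 2|) :
    interactionWeight x y ≤ |y| * (28 * |x - y / 2|) := by
  have hk_sq : √(1 + |x|) ^ 2 = 1 + |x| := Real.sq_sqrt (by positivity)
  have hh_sq : √(1 + |y|) ^ 2 = 1 + |y| := Real.sq_sqrt (by positivity)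
  have hk := one_le_sqrt_one_add_abs x
  have hh := one_le_sqrt_one_add_abs y
  have hsum : 1 + |y| + |x - y| ≤ |x - y / 2| + 3 / 2 * √(1 + |y|) ^ 2 := by
    linarith [abs_sub_le_abs_sub_half_add (x := x) (y := y)]
  refine interactionWeight_le_of_mul_cube ?_
  rcases le_total (√(1 + |y|)) (2 * √(1 + |x|)) with hle | hle
  · calc 1 + |y| + |x - y| ≤ |x - y / 2| + 3 / 2 * √(1 + |y|) ^ 2 := hsum
      _ ≤ √(1 + |y|) ^ 3 * |x - y / 2| +
            3 / 2 * (√(1 + |y|) ^ 2 * (√(1 + |y|) * |x - y / 2|)) := by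
          gcongr
          · exact le_mul_of_one_le_left (abs_nonneg _) (one_le_pow₀ hh)
          · exact le_mul_of_one_le_right (by positivity) h
      _ = 5 / 2 * |x - y / 2| * √(1 + |y|) ^ 3 := by ring
      _ ≤ 5 / 2 * |x - y / 2| * (2 * √(1 + |x|)) ^ 3 := by gcongr
      _ ≤ 28 * |x - y / 2| * √(1 + |x|) ^ 3 := by
          have : 0 ≤ |x - y / 2| * √(1 + |x|) ^ 3 := by positivity
          linarith
  · have hxy : 4 * (1 + |x|) ≤ 1 + |y| := by nlinarith
    calc 1 + |y| + |x - y| ≤ 28 * |x - y / 2| := by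
          linarith [abs_half_le_abs_sub_half_add (x := x) (y := y), abs_nonneg y,
            abs_nonneg (x - y / 2)]
      _ ≤ 28 * |x - y / 2| * √(1 + |x|) ^ 3 :=
          le_mul_of_one_le_right (by positivity) (one_le_pow₀ hk)

end Midpoint

lemma exists_dominatedByDeriv_right (ha₂ : a₂ ≠ 0) :
    ∃ D > 0, ∀ y ≠ 0, ∃ Z : Finset ℝ, Z.card ≤ 2 ∧
      DominatedByDeriv (fun x => 3 * a₂ * (x ^ 2 - (x - y) ^ 2))
        (fun x => interactionWeight x y) D Z := by
  have hderiv : ∀ x y, 3 * a₂ * (x ^ 2 - (x - y) ^ 2) = 6 * a₂ * y * (x - y / 2) := fun x y => by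
    ring
  refine ⟨max 16 (28 / (6 * |a₂|)), by positivity, fun y hy => ⟨{y / 2}, by simp, fun x hx => ?_,
    (√(1 + |y|))⁻¹, by positivity, fun x => ?_⟩⟩
  · simpa [hderiv, ha₂, hy, sub_eq_zero] using hx
  rcases le_total (√(1 + |y|) * |x - y / 2|) 1 with hnear | hfar
  · refine .inr ⟨y / 2, by simp, ?_,
      (interactionWeight_mul_le_of_near_half hnear).trans (le_max_left ..)⟩
    rwa [← one_div, le_div_iff₀' (by positivity)]
  · left
    calc interactionWeight x y ≤ |y| * (28 * |x - y / 2|) := interactionWeight_le_of_far_half hfar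
      _ = 28 / (6 * |a₂|) * |6 * a₂ * y * (x - y / 2)| := by
          simp only [abs_mul, Nat.abs_ofNat]
          field_simp
      _ ≤ _ := by
          simp only [hderiv]
          gcongr
          exact le_max_right ..

end Phases

end Weights

section Kernels

/-- The modulation `τ - a ξ³` of `z = (τ, ξ)`: its distance to the cubic dispersion curve. -/
def modulation (a : ℝ) (z : ℝ × ℝ) : ℝ :=
  z.1 - a * z.2 ^ 3

@[fun_prop]
lemma measurable_modulation (a : ℝ) : Measurable (modulation a) := by
  unfold modulation
  fun_prop

/-- The decaying weight `(1 + |y|)^{-b}` of a modulation `y`. -/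
noncomputable def decay (b y : ℝ) : ℝ :=
  (1 + |y|) ^ (-b)

lemma decay_nonneg (b y : ℝ) : 0 ≤ decay b y := by
  unfold decay
  positivity

lemma decay_neg (b y : ℝ) : decay b (-y) = decay b y := by
  rw [decay, abs_neg, decay]

lemma decay_le_one {b : ℝ} (hb : 0 ≤ b) (y : ℝ) : decay b y ≤ 1 :=
  Real.rpow_le_one_of_one_le_of_nonpos (by simp) (neg_nonpos.2 hb)

lemma sq_decay (b y : ℝ) : decay b y ^ 2 = decay (2 * b) y := by
  rw [decay, ← Real.rpow_mul_natCast (by positivity), decay]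
  congr 1
  push_cast
  ring

@[fun_prop]
lemma measurable_decay (b : ℝ) : Measurable (decay b) := by
  unfold decay
  fun_prop

lemma lintegral_decay_lt_top {b : ℝ} (hb : 1 < b) : ∫⁻ y, ENNReal.ofReal (decay b y) < ∞ := by
  simpa [decay] using finite_integral_one_add_norm (E := ℝ) (μ := volume) (r := b) (by simpa)

/-- The square root of the interaction weight times the decay of two of the three modulations. -/
noncomputable def pairKernel (b ξ ξ₁ l₁ l₂ : ℝ) : ℝ :=
  √(interactionWeight ξ ξ₁) * (decay b l₁ * decay b l₂)

lemma pairKernel_nonneg (b ξ ξ₁ l₁ l₂ : ℝ) : 0 ≤ pairKernel b ξ ξ₁ l₁ l₂ :=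
  mul_nonneg (Real.sqrt_nonneg _) (mul_nonneg (decay_nonneg ..) (decay_nonneg ..))

lemma sq_ofReal_pairKernel (b ξ ξ₁ l₁ l₂ : ℝ) :
    ENNReal.ofReal (pairKernel b ξ ξ₁ l₁ l₂) ^ 2 = ENNReal.ofReal (interactionWeight ξ ξ₁) *
      (ENNReal.ofReal (decay (2 * b) l₁) * ENNReal.ofReal (decay (2 * b) l₂)) := by
  have hW : 0 ≤ interactionWeight ξ ξ₁ := by
    unfold interactionWeight
    positivity
  rw [← ENNReal.ofReal_pow (pairKernel_nonneg ..), pairKernel, mul_pow, mul_pow, Real.sq_sqrt hW,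
    sq_decay, sq_decay, ENNReal.ofReal_mul hW, ENNReal.ofReal_mul (decay_nonneg ..)]

lemma measurable_pairKernel {X : Type*} [MeasurableSpace X] (b : ℝ) {ξ ξ₁ l₁ l₂ : X → ℝ}
    (hξ : Measurable ξ) (hξ₁ : Measurable ξ₁) (hl₁ : Measurable l₁) (hl₂ : Measurable l₂) :
    Measurable fun x => pairKernel b (ξ x) (ξ₁ x) (l₁ x) (l₂ x) := by
  have hW := measurable_interactionWeight
  unfold pairKernel
  fun_prop

variable {a₁ a₂ b : ℝ}

lemma exists_lintegral_prod_mul_decay_le {D : ℝ} (n : ℕ) (hb : 1 / 2 < b) (hD : 0 ≤ D) :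
    ∃ K : ℝ≥0∞, K ≠ ∞ ∧ ∀ {α β φ' W : ℝ → ℝ} {Z : Finset ℝ}, DominatedByDeriv φ' W D Z →
      Z.card ≤ n → Measurable W → Measurable α → Measurable β →
      (∀ x, HasDerivAt (fun x => α x - β x) (φ' x) x) →
      ∫⁻ p : ℝ × ℝ, ENNReal.ofReal (W p.2) * (ENNReal.ofReal (decay (2 * b) (p.1 - α p.2)) *
        ENNReal.ofReal (decay (2 * b) (p.1 - β p.2))) ≤ K ^ 2 := by
  have hfin : ∫⁻ y, ENNReal.ofReal (decay (2 * b) y) ≠ ∞ :=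
    (lintegral_decay_lt_top (by linarith)).ne
  set I := ∫⁻ y, ENNReal.ofReal (decay (2 * b) y)
  refine ⟨(I * (ENNReal.ofReal D * ((n + 1) * I + 2 * n))) ^ (1 / 2 : ℝ), by finiteness,
    fun hdom hn hW hα hβ hφ => ?_⟩
  rw [← ENNReal.rpow_mul_natCast]
  norm_num only [ENNReal.rpow_one]
  exact lintegral_prod_mul_translates_le hdom hn hD hW hα hβ hφ (by fun_prop)
    fun y => ENNReal.ofReal_le_one.2 (decay_le_one (by linarith) y)

lemma hasDerivAt_const_mul_pow_three (a x : ℝ) :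
    HasDerivAt (fun x => a * x ^ 3) (3 * (a * x ^ 2)) x :=
  ((hasDerivAt_pow 3 x).const_mul a).congr_deriv (by push_cast; ring)

lemma exists_lintegral_sq_pairKernel_output_le (ha₁ : a₁ ≠ 0)
    (hratio : a₂ / a₁ < 0 ∨ 1 < a₂ / a₁) (hb : 1 / 2 < b) :
    ∃ K : ℝ≥0∞, K ≠ ∞ ∧ ∀ z : ℝ × ℝ, ∫⁻ p : ℝ × ℝ, ENNReal.ofReal
      (pairKernel b z.2 p.2 (modulation a₁ p) (modulation a₂ (z - p))) ^ 2 ≤ K ^ 2 := by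
  obtain ⟨D, hD, hdom⟩ := exists_dominatedByDeriv_output ha₁ hratio
  obtain ⟨K, hK, hle⟩ := exists_lintegral_prod_mul_decay_le 2 hb hD.le
  refine ⟨K, hK, fun z => ?_⟩
  obtain ⟨Z, hZ, hdomZ⟩ := hdom z.2
  have hderiv : ∀ x, HasDerivAt (fun x => a₁ * x ^ 3 - (z.1 - a₂ * (z.2 - x) ^ 3))
      (3 * (a₁ * x ^ 2 - a₂ * (z.2 - x) ^ 2)) x := fun x => by
    have h := (hasDerivAt_const_mul_pow_three a₂ (z.2 - x)).comp_const_sub z.2 x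
    exact ((hasDerivAt_const_mul_pow_three a₁ x).sub (h.const_sub z.1)).congr_deriv (by ring)
  have hW := measurable_interactionWeight
  refine le_of_eq_of_le (lintegral_congr fun p => ?_)
    (hle hdomZ hZ (by fun_prop) (by fun_prop) (by fun_prop) hderiv)
  rw [sq_ofReal_pairKernel, ← decay_neg _ (modulation a₂ (z - p))]
  simp only [modulation, Prod.fst_sub, Prod.snd_sub]
  ring_nf

lemma exists_lintegral_sq_pairKernel_right_le (ha₂ : a₂ ≠ 0) (hb : 1 / 2 < b) :
    ∃ K : ℝ≥0∞, K ≠ ∞ ∧ ∀ p : ℝ × ℝ, ∫⁻ z : ℝ × ℝ, ENNReal.ofReal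
      (pairKernel b z.2 p.2 (modulation a₂ z) (modulation a₂ (z - p))) ^ 2 ≤ K ^ 2 := by
  obtain ⟨D, hD, hdom⟩ := exists_dominatedByDeriv_right ha₂
  obtain ⟨K, hK, hle⟩ := exists_lintegral_prod_mul_decay_le 2 hb hD.le
  refine ⟨K, hK, fun p => ?_⟩
  rcases eq_or_ne p.2 0 with hp | hp
  · simp [pairKernel, interactionWeight, hp]
  obtain ⟨Z, hZ, hdomZ⟩ := hdom p.2 hp
  have hderiv : ∀ x, HasDerivAt (fun x => a₂ * x ^ 3 - (p.1 + a₂ * (x - p.2) ^ 3))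
      (3 * a₂ * (x ^ 2 - (x - p.2) ^ 2)) x := fun x => by
    have h := (hasDerivAt_const_mul_pow_three a₂ (x - p.2)).comp_sub_const x p.2
    exact ((hasDerivAt_const_mul_pow_three a₂ x).sub (h.const_add p.1)).congr_deriv (by ring)
  have hW := measurable_interactionWeight
  refine le_of_eq_of_le (lintegral_congr fun z => ?_)
    (hle hdomZ hZ (by fun_prop) (by fun_prop) (by fun_prop) hderiv)
  rw [sq_ofReal_pairKernel]
  simp only [modulation, Prod.fst_sub, Prod.snd_sub, sub_sub]

lemma exists_lintegral_sq_pairKernel_left_le (ha₁ : a₁ ≠ 0)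
    (hratio : a₂ / a₁ < 0 ∨ 1 < a₂ / a₁) (hb : 1 / 2 < b) :
    ∃ K : ℝ≥0∞, K ≠ ∞ ∧ ∀ q : ℝ × ℝ, ∫⁻ z : ℝ × ℝ, ENNReal.ofReal
      (pairKernel b z.2 (z - q).2 (modulation a₂ z) (modulation a₁ (z - q))) ^ 2 ≤ K ^ 2 := by
  obtain ⟨D, hD, hdom⟩ := exists_dominatedByDeriv_left ha₁ hratio
  obtain ⟨K, hK, hle⟩ := exists_lintegral_prod_mul_decay_le 2 hb hD.le
  refine ⟨K, hK, fun q => ?_⟩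
  obtain ⟨Z, hZ, hdomZ⟩ := hdom q.2
  have hderiv : ∀ x, HasDerivAt (fun x => a₂ * x ^ 3 - (q.1 + a₁ * (x - q.2) ^ 3))
      (3 * (a₂ * x ^ 2 - a₁ * (x - q.2) ^ 2)) x := fun x => by
    have h := (hasDerivAt_const_mul_pow_three a₁ (x - q.2)).comp_sub_const x q.2
    exact ((hasDerivAt_const_mul_pow_three a₂ x).sub (h.const_add q.1)).congr_deriv (by ring)
  have hW := measurable_interactionWeight
  refine le_of_eq_of_le (lintegral_congr fun z => ?_)
    (hle hdomZ hZ (by fun_prop) (by fun_prop) (by fun_prop) hderiv)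
  rw [sq_ofReal_pairKernel]
  simp only [modulation, Prod.fst_sub, Prod.snd_sub, sub_sub]

/-- The kernel of the bilinear form after cancelling the Gevrey weights: one `pairKernel` for each
choice of which of the three modulations is the largest one, whose decay is spent on the
resonance. -/
noncomputable def interactionKernel (a₁ a₂ b : ℝ) (z p : ℝ × ℝ) : ℝ :=
  pairKernel b z.2 p.2 (modulation a₁ p) (modulation a₂ (z - p)) +
    pairKernel b z.2 p.2 (modulation a₂ z) (modulation a₂ (z - p)) +
    pairKernel b z.2 p.2 (modulation a₂ z) (modulation a₁ p)

lemma interactionKernel_nonneg (a₁ a₂ b : ℝ) (z p : ℝ × ℝ) : 0 ≤ interactionKernel a₁ a₂ b z p :=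
  add_nonneg (add_nonneg (pairKernel_nonneg ..) (pairKernel_nonneg ..)) (pairKernel_nonneg ..)

lemma measurable_ofReal_interactionKernel (a₁ a₂ b : ℝ) :
    Measurable (Function.uncurry fun z p => ENNReal.ofReal (interactionKernel a₁ a₂ b z p)) := by
  refine ENNReal.measurable_ofReal.comp ((Measurable.add ?_ ?_).add ?_) <;>
  exact measurable_pairKernel b (by fun_prop) (by fun_prop) (by fun_prop) (by fun_prop)

lemma exists_eLpNorm_multiplierConv_interactionKernel_le (ha₁ : a₁ ≠ 0) (ha₂ : a₂ ≠ 0)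
    (hratio : a₂ / a₁ < 0 ∨ 1 < a₂ / a₁) (hb : 1 / 2 < b) :
    ∃ K : ℝ≥0∞, K ≠ ∞ ∧ ∀ {F G : ℝ × ℝ → ℝ≥0∞}, Measurable F → Measurable G →
      eLpNorm (multiplierConv volume
        (fun z p => ENNReal.ofReal (interactionKernel a₁ a₂ b z p)) F G) 2 volume ≤
        K * (eLpNorm F 2 volume * eLpNorm G 2 volume) := by
  obtain ⟨K₀, hK₀, hle₀⟩ := exists_lintegral_sq_pairKernel_output_le ha₁ hratio hb
  obtain ⟨K₁, hK₁, hle₁⟩ := exists_lintegral_sq_pairKernel_right_le (b := b) ha₂ hb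
  obtain ⟨K₂, hK₂, hle₂⟩ := exists_lintegral_sq_pairKernel_left_le ha₁ hratio hb
  have hmeas {l₁ l₂ : (ℝ × ℝ) × (ℝ × ℝ) → ℝ} (hl₁ : Measurable l₁) (hl₂ : Measurable l₂) :
      Measurable (Function.uncurry fun z p : ℝ × ℝ =>
        ENNReal.ofReal (pairKernel b z.2 p.2 (l₁ (z, p)) (l₂ (z, p)))) :=
    ENNReal.measurable_ofReal.comp (measurable_pairKernel b (by fun_prop) (by fun_prop) hl₁ hl₂)
  have hm₀ := hmeas (l₁ := fun x => modulation a₁ x.2) (l₂ := fun x => modulation a₂ (x.1 - x.2))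
    (by fun_prop) (by fun_prop)
  have hm₁ := hmeas (l₁ := fun x => modulation a₂ x.1) (l₂ := fun x => modulation a₂ (x.1 - x.2))
    (by fun_prop) (by fun_prop)
  have hm₂ := hmeas (l₁ := fun x => modulation a₂ x.1) (l₂ := fun x => modulation a₁ x.2)
    (by fun_prop) (by fun_prop)
  refine ⟨K₀ + K₁ + K₂, by finiteness, fun hF hG => ?_⟩
  simp only [interactionKernel, ENNReal.ofReal_add (add_nonneg (pairKernel_nonneg ..)
    (pairKernel_nonneg ..)) (pairKernel_nonneg ..), ENNReal.ofReal_add (pairKernel_nonneg ..)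
    (pairKernel_nonneg ..)]
  rw [add_mul, add_mul]
  refine (eLpNorm_multiplierConv_add_le (hm₀.add hm₁) hm₂ hF hG).trans (add_le_add
    ((eLpNorm_multiplierConv_add_le hm₀ hm₁ hF hG).trans (add_le_add ?_ ?_)) ?_)
  · exact eLpNorm_multiplierConv_le_of_output hm₀ hF hG hle₀
  · exact eLpNorm_multiplierConv_le_of_right hm₁ hF hG hle₁
  · exact eLpNorm_multiplierConv_le_of_left hm₂ hF hG hle₂

end Kernels

section Symbol

variable {a₁ a₂ : ℝ}

lemma exists_mul_sq_add_sq_le {r : ℝ} (hr : r < 0 ∨ 4 < r) :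
    ∃ c > 0, ∀ x y : ℝ, c * (x ^ 2 + y ^ 2) ≤ |3 * r * (x - y / 2) ^ 2 + (r / 4 - 1) * y ^ 2| := by
  have hdef {A B : ℝ} (hA : 0 < A) (hB : 0 < B) (x y : ℝ) :
      min A B / 4 * (x ^ 2 + y ^ 2) ≤ A * (x - y / 2) ^ 2 + B * y ^ 2 :=
    calc min A B / 4 * (x ^ 2 + y ^ 2)
        ≤ min A B / 4 * (4 * ((x - y / 2) ^ 2 + y ^ 2)) := by
          gcongr
          nlinarith [sq_nonneg (x - y), sq_nonneg (x - 2 * y / 3)]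
      _ = min A B * (x - y / 2) ^ 2 + min A B * y ^ 2 := by ring
      _ ≤ A * (x - y / 2) ^ 2 + B * y ^ 2 := by
          gcongr
          exacts [min_le_left .., min_le_right ..]
  rcases hr with hneg | hgt
  · have hA : 0 < -(3 * r) := by linarith
    have hB : 0 < 1 - r / 4 := by linarith
    refine ⟨min (-(3 * r)) (1 - r / 4) / 4, by positivity, fun x y => (hdef hA hB x y).trans ?_⟩
    exact le_of_eq_of_le (by ring) (neg_le_abs _)
  · have hA : 0 < 3 * r := by linarith
    have hB : 0 < r / 4 - 1 := by linarith
    exact ⟨min (3 * r) (r / 4 - 1) / 4, by positivity,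
      fun x y => (hdef hA hB x y).trans (le_abs_self _)⟩

/-- The resonance function of the interaction: at output frequency `ξ` and frequency `ξ₁` of `g`,
the three modulations differ by this amount. -/
def resonance (a₁ a₂ ξ ξ₁ : ℝ) : ℝ :=
  a₂ * ξ ^ 3 - a₁ * ξ₁ ^ 3 - a₂ * (ξ - ξ₁) ^ 3

lemma exists_abs_mul_add_sq_le_abs_resonance (ha₁ : a₁ ≠ 0)
    (hratio : a₂ / a₁ < 0 ∨ 4 < a₂ / a₁) :
    ∃ c > 0, ∀ ξ ξ₁ : ℝ, c * (|ξ₁| * (ξ ^ 2 + ξ₁ ^ 2)) ≤ |resonance a₁ a₂ ξ ξ₁| := by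
  obtain ⟨c, hc, hle⟩ := exists_mul_sq_add_sq_le hratio
  refine ⟨|a₁| * c, by positivity, fun ξ ξ₁ => ?_⟩
  calc |a₁| * c * (|ξ₁| * (ξ ^ 2 + ξ₁ ^ 2)) = |a₁| * |ξ₁| * (c * (ξ ^ 2 + ξ₁ ^ 2)) := by ring
    _ ≤ |a₁| * |ξ₁| *
          |3 * (a₂ / a₁) * (ξ - ξ₁ / 2) ^ 2 + (a₂ / a₁ / 4 - 1) * ξ₁ ^ 2| := by
        gcongr
        exact hle ξ ξ₁
    _ = |resonance a₁ a₂ ξ ξ₁| := by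
        rw [← abs_mul, ← abs_mul, resonance]
        congr 1
        field_simp
        ring

lemma exists_abs_mul_sq_le_one_add_abs_resonance (ha₁ : a₁ ≠ 0)
    (hratio : a₂ / a₁ < 0 ∨ 4 < a₂ / a₁) :
    ∃ c > 0, ∀ ξ ξ₁ : ℝ,
      c * (|ξ₁| * (1 + |ξ₁| + |ξ - ξ₁|) ^ 2) ≤ 1 + |resonance a₁ a₂ ξ ξ₁| := by
  obtain ⟨c, hc, hle⟩ := exists_abs_mul_add_sq_le_abs_resonance ha₁ hratio
  refine ⟨min 1 c / 15, by positivity, fun ξ ξ₁ => ?_⟩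
  have hN : 1 + |ξ₁| + |ξ - ξ₁| ≤ 1 + 2 * |ξ₁| + |ξ| := by linarith [abs_sub ξ ξ₁]
  have hcube : |ξ₁| ≤ 1 + |ξ₁| * ξ₁ ^ 2 := by
    rw [← sq_abs ξ₁]
    nlinarith [abs_nonneg ξ₁, mul_nonneg (abs_nonneg ξ₁) (sq_nonneg (|ξ₁| - 1)),
      sq_nonneg (|ξ₁| - 1)]
  have hpoly : |ξ₁| * (1 + |ξ₁| + |ξ - ξ₁|) ^ 2 ≤ 15 * (1 + |ξ₁| * (ξ ^ 2 + ξ₁ ^ 2)) :=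
    calc |ξ₁| * (1 + |ξ₁| + |ξ - ξ₁|) ^ 2 ≤ |ξ₁| * (1 + 2 * |ξ₁| + |ξ|) ^ 2 := by gcongr
      _ ≤ |ξ₁| * (3 * (1 + 4 * ξ₁ ^ 2 + ξ ^ 2)) := by
          gcongr
          rw [← sq_abs ξ₁, ← sq_abs ξ]
          nlinarith [sq_nonneg (1 - 2 * |ξ₁|), sq_nonneg (1 - |ξ|), sq_nonneg (2 * |ξ₁| - |ξ|)]
      _ ≤ 15 * (1 + |ξ₁| * (ξ ^ 2 + ξ₁ ^ 2)) := by
          have : 0 ≤ |ξ₁| * ξ ^ 2 := by positivity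
          linarith
  calc min 1 c / 15 * (|ξ₁| * (1 + |ξ₁| + |ξ - ξ₁|) ^ 2)
      ≤ min 1 c / 15 * (15 * (1 + |ξ₁| * (ξ ^ 2 + ξ₁ ^ 2))) := by gcongr
    _ = min 1 c * 1 + min 1 c * (|ξ₁| * (ξ ^ 2 + ξ₁ ^ 2)) := by ring
    _ ≤ 1 * 1 + c * (|ξ₁| * (ξ ^ 2 + ξ₁ ^ 2)) := by
        gcongr
        exacts [min_le_left .., min_le_right ..]
    _ ≤ 1 + |resonance a₁ a₂ ξ ξ₁| := by linarith [hle ξ ξ₁]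

/-- The largest of the three weights `1 + |modulation|` of the interaction of the mode `z - p` of
`f` with the mode `p` of `g` into the mode `z`. -/
noncomputable def maxModulation (a₁ a₂ : ℝ) (z p : ℝ × ℝ) : ℝ :=
  max (1 + |modulation a₂ z|) (max (1 + |modulation a₁ p|) (1 + |modulation a₂ (z - p)|))

lemma one_add_abs_resonance_le_maxModulation (z p : ℝ × ℝ) :
    1 + |resonance a₁ a₂ z.2 p.2| ≤ 3 * maxModulation a₁ a₂ z p := by
  have hres : resonance a₁ a₂ z.2 p.2 =
      modulation a₁ p + modulation a₂ (z - p) - modulation a₂ z := by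
    simp only [resonance, modulation, Prod.fst_sub, Prod.snd_sub]
    ring
  have hz : 1 + |modulation a₂ z| ≤ maxModulation a₁ a₂ z p := le_max_left ..
  have hp : 1 + |modulation a₁ p| ≤ maxModulation a₁ a₂ z p := le_max_of_le_right (le_max_left ..)
  have hzp : 1 + |modulation a₂ (z - p)| ≤ maxModulation a₁ a₂ z p :=
    le_max_of_le_right (le_max_right ..)
  rw [hres]
  linarith [abs_sub (modulation a₁ p + modulation a₂ (z - p)) (modulation a₂ z),
    abs_add_le (modulation a₁ p) (modulation a₂ (z - p))]

lemma rpow_neg_mul_rpow_neg_le_swap {A B q b : ℝ} (hA : 0 < A) (hAB : A ≤ B) (hqb : q ≤ b) :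
    A ^ (-q) * B ^ (-b) ≤ B ^ (-q) * A ^ (-b) := by
  have hB : 0 < B := hA.trans_le hAB
  calc A ^ (-q) * B ^ (-b) = A ^ (b - q) * (A ^ (-b) * B ^ (-b)) := by
        rw [← mul_assoc, ← Real.rpow_add hA]
        ring_nf
    _ ≤ B ^ (b - q) * (A ^ (-b) * B ^ (-b)) := by gcongr
    _ = B ^ (-q) * A ^ (-b) := by
        rw [mul_left_comm, ← Real.rpow_add hB, mul_comm]
        ring_nf

lemma rpow_neg_mul_le_max_rpow_neg_mul {A B C q b : ℝ} (hA : 0 < A) (hB : 0 < B) (hC : 0 < C)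
    (hqb : q ≤ b) :
    A ^ (-q) * (B ^ (-b) * C ^ (-b)) ≤ max A (max B C) ^ (-q) *
      (B ^ (-b) * C ^ (-b) + A ^ (-b) * C ^ (-b) + A ^ (-b) * B ^ (-b)) := by
  rcases le_total (max B C) A with hmax | hmax
  · rw [max_eq_left hmax]
    gcongr
    linarith [(by positivity : 0 ≤ A ^ (-b) * C ^ (-b) + A ^ (-b) * B ^ (-b))]
  rw [max_eq_right hmax]
  rcases le_total C B with hCB | hBC
  · rw [max_eq_left hCB] at hmax ⊢
    calc A ^ (-q) * (B ^ (-b) * C ^ (-b)) = A ^ (-q) * B ^ (-b) * C ^ (-b) := by ring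
      _ ≤ B ^ (-q) * A ^ (-b) * C ^ (-b) :=
          mul_le_mul_of_nonneg_right (rpow_neg_mul_rpow_neg_le_swap hA hmax hqb) (by positivity)
      _ ≤ _ := by
          rw [mul_assoc]
          gcongr
          linarith [(by positivity : 0 ≤ B ^ (-b) * C ^ (-b) + A ^ (-b) * B ^ (-b))]
  · rw [max_eq_right hBC] at hmax ⊢
    calc A ^ (-q) * (B ^ (-b) * C ^ (-b)) = A ^ (-q) * C ^ (-b) * B ^ (-b) := by ring
      _ ≤ C ^ (-q) * A ^ (-b) * B ^ (-b) :=
          mul_le_mul_of_nonneg_right (rpow_neg_mul_rpow_neg_le_swap hA hmax hqb) (by positivity)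
      _ ≤ _ := by
          rw [mul_assoc]
          gcongr
          linarith [(by positivity : 0 ≤ B ^ (-b) * C ^ (-b) + A ^ (-b) * C ^ (-b))]

lemma sqrt_interactionWeight (ξ ξ₁ : ℝ) :
    √(interactionWeight ξ ξ₁) =
      √|ξ₁| * (√(1 + |ξ₁| + |ξ - ξ₁|) * (1 + |ξ|) ^ (-(3 / 4) : ℝ)) := by
  have hpow : √(√(1 + |ξ|) ^ 3) = (1 + |ξ|) ^ (3 / 4 : ℝ) := by
    rw [Real.sqrt_eq_rpow, Real.sqrt_eq_rpow, ← Real.rpow_mul_natCast (by positivity),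
      ← Real.rpow_mul (by positivity)]
    norm_num
  rw [interactionWeight, Real.sqrt_div (by positivity), Real.sqrt_mul (abs_nonneg _), hpow,
    Real.rpow_neg (by positivity), mul_div_assoc, div_eq_mul_inv]

variable {δ : ℝ}

lemma rpow_neg_mul_le_sqrt_mul_rpow {c L X N : ℝ} (hc : 0 < c) (hX : 0 ≤ X) (hN : 0 < N)
    (hXN : X ≤ N) (hδ : 0 ≤ δ) (hδ' : δ ≤ 1 / 2) (hL : c * (X * N ^ 2) ≤ L) :
    L ^ (-(1 / 2 - δ)) * X ≤ c ^ (-(1 / 2 - δ)) * (√X * N ^ (3 * δ - 1)) := by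
  rcases hX.eq_or_lt with rfl | hX
  · simp
  calc L ^ (-(1 / 2 - δ)) * X ≤ (c * (X * N ^ 2)) ^ (-(1 / 2 - δ)) * X :=
        mul_le_mul_of_nonneg_right
          (Real.rpow_le_rpow_of_nonpos (by positivity) hL (by linarith)) hX.le
    _ = c ^ (-(1 / 2 - δ)) * (√X * (X ^ δ * N ^ (2 * δ - 1))) := by
        have hXpow : X ^ (-(1 / 2 - δ)) * X = √X * X ^ δ := by
          rw [Real.sqrt_eq_rpow, ← Real.rpow_add hX, ← Real.rpow_add_one hX.ne']
          ring_nf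
        have hNpow : (N ^ 2) ^ (-(1 / 2 - δ)) = N ^ (2 * δ - 1) := by
          rw [← Real.rpow_natCast_mul hN.le]
          push_cast
          ring_nf
        rw [Real.mul_rpow hc.le (by positivity), Real.mul_rpow hX.le (by positivity), hNpow]
        linear_combination c ^ (-(1 / 2 - δ)) * N ^ (2 * δ - 1) * hXpow
    _ ≤ c ^ (-(1 / 2 - δ)) * (√X * (N ^ δ * N ^ (2 * δ - 1))) := by gcongr
    _ = c ^ (-(1 / 2 - δ)) * (√X * N ^ (3 * δ - 1)) := by
        rw [← Real.rpow_add hN]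
        ring_nf

lemma rpow_mul_rpow_mul_le_sqrt_mul {M N P Q : ℝ} (hM : 0 < M) (hMN : M ≤ N) (hP : 0 ≤ P)
    (hPN : P ≤ N) (hQ : 0 ≤ Q) (hQN : Q ≤ N) (hδ : 0 ≤ δ) (hδ' : δ ≤ 1 / 4) :
    N ^ (3 * δ - 1) * ((P * Q) ^ (3 / 4 - 3 * δ) * M ^ (-(3 / 4 - 3 * δ))) ≤
      √N * M ^ (-(3 / 4) : ℝ) := by
  have hN : 0 < N := hM.trans_le hMN
  have hρ : 0 ≤ 3 / 4 - 3 * δ := by linarith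
  calc N ^ (3 * δ - 1) * ((P * Q) ^ (3 / 4 - 3 * δ) * M ^ (-(3 / 4 - 3 * δ)))
      ≤ N ^ (3 * δ - 1) * ((N * N) ^ (3 / 4 - 3 * δ) * M ^ (-(3 / 4 - 3 * δ))) := by gcongr
    _ = √N * (N ^ (-(3 * δ)) * M ^ (-(3 / 4 - 3 * δ))) := by
        rw [Real.mul_rpow hN.le hN.le, Real.sqrt_eq_rpow]
        simp only [← mul_assoc, ← Real.rpow_add hN]
        ring_nf
    _ ≤ √N * (M ^ (-(3 * δ)) * M ^ (-(3 / 4 - 3 * δ))) :=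
        mul_le_mul_of_nonneg_left (mul_le_mul_of_nonneg_right
          (Real.rpow_le_rpow_of_nonpos hM hMN (by linarith)) (by positivity)) (Real.sqrt_nonneg _)
    _ = √N * M ^ (-(3 / 4) : ℝ) := by
        rw [← Real.rpow_add hM]
        ring_nf

lemma one_add_abs_rpow_le {s ρ : ℝ} (hsρ : 0 ≤ s + ρ) (ξ ξ₁ : ℝ) :
    (1 + |ξ|) ^ s ≤ (1 + |ξ - ξ₁|) ^ s * (1 + |ξ₁|) ^ s *
      (((1 + |ξ - ξ₁|) * (1 + |ξ₁|)) ^ ρ * (1 + |ξ|) ^ (-ρ)) := by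
  have htri : 1 + |ξ| ≤ (1 + |ξ - ξ₁|) * (1 + |ξ₁|) := by
    have h := abs_add_le (ξ - ξ₁) ξ₁
    rw [sub_add_cancel] at h
    linarith [mul_nonneg (abs_nonneg (ξ - ξ₁)) (abs_nonneg ξ₁)]
  calc (1 + |ξ|) ^ s = (1 + |ξ|) ^ (s + ρ) * (1 + |ξ|) ^ (-ρ) := by
        rw [← Real.rpow_add (by positivity), add_neg_cancel_right]
    _ ≤ ((1 + |ξ - ξ₁|) * (1 + |ξ₁|)) ^ (s + ρ) * (1 + |ξ|) ^ (-ρ) := by gcongr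
    _ = _ := by
        rw [Real.rpow_add (by positivity), Real.mul_rpow (z := s) (by positivity) (by positivity)]
        ring

lemma exists_maxModulation_rpow_mul_le_sqrt_interactionWeight (ha₁ : a₁ ≠ 0)
    (hratio : a₂ / a₁ < 0 ∨ 4 < a₂ / a₁) (hδ : 0 ≤ δ) (hδ' : δ ≤ 1 / 4) :
    ∃ C > 0, ∀ z p : ℝ × ℝ, maxModulation a₁ a₂ z p ^ (-(1 / 2 - δ)) * |p.2| *
      (((1 + |z.2 - p.2|) * (1 + |p.2|)) ^ (3 / 4 - 3 * δ) * (1 + |z.2|) ^ (-(3 / 4 - 3 * δ))) ≤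
        C * √(interactionWeight z.2 p.2) := by
  obtain ⟨c, hc, hres⟩ := exists_abs_mul_sq_le_one_add_abs_resonance ha₁ hratio
  refine ⟨(c / 3) ^ (-(1 / 2 - δ)), by positivity, fun z p => ?_⟩
  set N := 1 + |p.2| + |z.2 - p.2|
  have hp := abs_nonneg p.2
  have hzp := abs_nonneg (z.2 - p.2)
  have hzN : 1 + |z.2| ≤ N := by
    have h := abs_add_le (z.2 - p.2) p.2
    rw [sub_add_cancel] at h
    linarith
  have hL : c / 3 * (|p.2| * N ^ 2) ≤ maxModulation a₁ a₂ z p := by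
    linarith [hres z.2 p.2, one_add_abs_resonance_le_maxModulation (a₁ := a₁) (a₂ := a₂) z p]
  have hmod := rpow_neg_mul_le_sqrt_mul_rpow (δ := δ) (by positivity) hp (by positivity)
    (by linarith) hδ (by linarith) hL
  have hfreq := rpow_mul_rpow_mul_le_sqrt_mul (δ := δ) (by positivity) hzN
    (by positivity : 0 ≤ 1 + |z.2 - p.2|) (by linarith) (by positivity : 0 ≤ 1 + |p.2|)
    (by linarith) hδ hδ'
  set R := ((1 + |z.2 - p.2|) * (1 + |p.2|)) ^ (3 / 4 - 3 * δ) * (1 + |z.2|) ^ (-(3 / 4 - 3 * δ))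
  calc maxModulation a₁ a₂ z p ^ (-(1 / 2 - δ)) * |p.2| * R
      ≤ (c / 3) ^ (-(1 / 2 - δ)) * (√|p.2| * N ^ (3 * δ - 1)) * R := by gcongr
    _ = (c / 3) ^ (-(1 / 2 - δ)) * (√|p.2| * (N ^ (3 * δ - 1) * R)) := by ring
    _ ≤ (c / 3) ^ (-(1 / 2 - δ)) * √(interactionWeight z.2 p.2) := by
        rw [sqrt_interactionWeight]
        gcongr

/-- The weight `e^{σ|ξ|} (1 + |ξ|)^s (1 + |τ - a ξ³|)^b` at `z = (τ, ξ)` whose weighted `L²` norm is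
the Gevrey–Bourgain norm. -/
noncomputable def gevreyWeight (a σ s b : ℝ) (z : ℝ × ℝ) : ℝ :=
  Real.exp (σ * |z.2|) * (1 + |z.2|) ^ s * (1 + |modulation a z|) ^ b

lemma gevreyWeight_nonneg (a σ s b : ℝ) (z : ℝ × ℝ) : 0 ≤ gevreyWeight a σ s b z := by
  unfold gevreyWeight
  positivity

@[fun_prop]
lemma measurable_gevreyWeight (a σ s b : ℝ) : Measurable (gevreyWeight a σ s b) := by
  unfold gevreyWeight
  fun_prop

/-- The sum over the three pairs of modulations of the products of their decaying weights. -/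
noncomputable def modulationDecay (a₁ a₂ b : ℝ) (z p : ℝ × ℝ) : ℝ :=
  decay b (modulation a₁ p) * decay b (modulation a₂ (z - p)) +
    decay b (modulation a₂ z) * decay b (modulation a₂ (z - p)) +
    decay b (modulation a₂ z) * decay b (modulation a₁ p)

lemma modulationDecay_nonneg (a₁ a₂ b : ℝ) (z p : ℝ × ℝ) : 0 ≤ modulationDecay a₁ a₂ b z p := by
  unfold modulationDecay decay
  positivity

lemma interactionKernel_eq_sqrt_mul (a₁ a₂ b : ℝ) (z p : ℝ × ℝ) :
    interactionKernel a₁ a₂ b z p =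
      √(interactionWeight z.2 p.2) * modulationDecay a₁ a₂ b z p := by
  simp only [interactionKernel, pairKernel, modulationDecay]
  ring

lemma one_add_abs_modulation_rpow_le {b e q : ℝ} (he : e ≤ -q) (hqb : q ≤ b) (z p : ℝ × ℝ) :
    (1 + |modulation a₂ z|) ^ e ≤ maxModulation a₁ a₂ z p ^ (-q) *
      modulationDecay a₁ a₂ b z p *
      ((1 + |modulation a₂ (z - p)|) ^ b * (1 + |modulation a₁ p|) ^ b) := by
  have hcancel : ∀ y : ℝ, (1 + |y|) ^ (-b) * (1 + |y|) ^ b = 1 := fun y => by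
    rw [← Real.rpow_add (by positivity), neg_add_cancel, Real.rpow_zero]
  unfold modulationDecay decay maxModulation
  generalize modulation a₂ z = l, modulation a₁ p = l₁, modulation a₂ (z - p) = l₂
  calc (1 + |l|) ^ e ≤ (1 + |l|) ^ (-q) := Real.rpow_le_rpow_of_exponent_le (by simp) he
    _ = (1 + |l|) ^ (-q) * ((1 + |l₁|) ^ (-b) * (1 + |l₂|) ^ (-b)) *
          ((1 + |l₂|) ^ b * (1 + |l₁|) ^ b) := by
        linear_combination -(1 + |l|) ^ (-q) *
          (hcancel l₁ * ((1 + |l₂|) ^ (-b) * (1 + |l₂|) ^ b) + hcancel l₂)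
    _ ≤ _ := mul_le_mul_of_nonneg_right (rpow_neg_mul_le_max_rpow_neg_mul (by positivity)
          (by positivity) (by positivity) hqb) (by positivity)

lemma exists_gevreyWeight_mul_abs_le {s b : ℝ} (ha₁ : a₁ ≠ 0)
    (hratio : a₂ / a₁ < 0 ∨ 4 < a₂ / a₁) (hδ : 0 ≤ δ) (hδ' : δ ≤ 1 / 4) (hs : 3 * δ ≤ s + 3 / 4)
    (hb : 1 / 2 - δ ≤ b) :
    ∃ C > 0, ∀ σ ≥ 0, ∀ e ≤ -(1 / 2 - δ), ∀ z p : ℝ × ℝ,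
      gevreyWeight a₂ σ s e z * |p.2| ≤ C * (interactionKernel a₁ a₂ b z p *
        (gevreyWeight a₂ σ s b (z - p) * gevreyWeight a₁ σ s b p)) := by
  obtain ⟨C, hC, hle⟩ :=
    exists_maxModulation_rpow_mul_le_sqrt_interactionWeight ha₁ hratio hδ hδ'
  refine ⟨C, hC, fun σ hσ e he z p => ?_⟩
  have hexp : Real.exp (σ * |z.2|) ≤ Real.exp (σ * |z.2 - p.2|) * Real.exp (σ * |p.2|) := by
    rw [← Real.exp_add, ← mul_add]
    gcongr
    exact (abs_add_le _ _).trans' (by rw [sub_add_cancel])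
  have hfreq := one_add_abs_rpow_le (s := s) (ρ := 3 / 4 - 3 * δ) (by linarith) z.2 p.2
  have hmod := one_add_abs_modulation_rpow_le (a₁ := a₁) (a₂ := a₂) he hb z p
  have hres := hle z p
  have hdecay := modulationDecay_nonneg a₁ a₂ b z p
  simp only [gevreyWeight, interactionKernel_eq_sqrt_mul, Prod.snd_sub]
  set R := ((1 + |z.2 - p.2|) * (1 + |p.2|)) ^ (3 / 4 - 3 * δ) * (1 + |z.2|) ^ (-(3 / 4 - 3 * δ))
  set E := Real.exp (σ * |z.2 - p.2|) * Real.exp (σ * |p.2|)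
  set S := (1 + |z.2 - p.2|) ^ s * (1 + |p.2|) ^ s
  set B := (1 + |modulation a₂ (z - p)|) ^ b * (1 + |modulation a₁ p|) ^ b
  set W := modulationDecay a₁ a₂ b z p
  calc Real.exp (σ * |z.2|) * (1 + |z.2|) ^ s * (1 + |modulation a₂ z|) ^ e * |p.2|
      ≤ E * (S * R) * (maxModulation a₁ a₂ z p ^ (-(1 / 2 - δ)) * W * B) * |p.2| := by gcongr
    _ = E * S * W * B * (maxModulation a₁ a₂ z p ^ (-(1 / 2 - δ)) * |p.2| * R) := by ring
    _ ≤ E * S * W * B * (C * √(interactionWeight z.2 p.2)) := by gcongr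
    _ = _ := by ring

end Symbol

section Norms

/-- The weighted Fourier transform of `u` whose `L²` norm is the Gevrey–Bourgain norm of `u`. -/
noncomputable def weightedFT (a σ s b : ℝ) (u : ℝ → ℝ → ℂ) (z : ℝ × ℝ) : ℝ≥0∞ :=
  ENNReal.ofReal (gevreyWeight a σ s b z) * ‖FT2 u z.1 z.2‖ₑ

lemma measurable_weightedFT (a σ s b : ℝ) (f : SchwartzMap (ℝ × ℝ) ℂ) :
    Measurable (weightedFT a σ s b fun t x => f (t, x)) := by
  have hf := (continuous_FT2 f).measurable
  unfold weightedFT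
  fun_prop

lemma sq_weightedFT (a σ s b : ℝ) (u : ℝ → ℝ → ℂ) (τ ξ : ℝ) :
    weightedFT a σ s b u (τ, ξ) ^ 2 = ENNReal.ofReal (Real.exp (2 * σ * |ξ|) *
      (1 + |ξ|) ^ (2 * s) * (1 + |τ - a * ξ ^ 3|) ^ (2 * b) * ‖FT2 u τ ξ‖ ^ 2) := by
  have hrpow : ∀ y t : ℝ, 0 ≤ y → (y ^ t) ^ 2 = y ^ (2 * t) := fun y t hy => by
    rw [← Real.rpow_mul_natCast hy, mul_comm, Nat.cast_two]
  have hexp : Real.exp (σ * |ξ|) ^ 2 = Real.exp (2 * σ * |ξ|) := by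
    rw [← Real.exp_nat_mul, Nat.cast_two, mul_assoc]
  rw [weightedFT, ← ofReal_norm, ← ENNReal.ofReal_mul (gevreyWeight_nonneg ..),
    ← ENNReal.ofReal_pow (mul_nonneg (gevreyWeight_nonneg ..) (norm_nonneg _)), gevreyWeight,
    modulation, mul_pow, mul_pow, mul_pow, hexp, hrpow _ _ (by positivity),
    hrpow _ _ (by positivity)]

variable {a σ s b : ℝ} {u : ℝ → ℝ → ℂ}

lemma XNorm_le_mul_eLpNorm {T : ℝ × ℝ → ℝ≥0∞} (hT : Measurable T) {c : ℝ≥0∞}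
    (hle : ∀ z, weightedFT a σ s b u z ≤ c * T z) :
    XNorm a σ s b u ≤ c * eLpNorm T 2 volume := by
  rw [XNorm, one_div, ENNReal.rpow_inv_le_iff two_pos, ENNReal.rpow_two, mul_pow, sq_eLpNorm_two,
    Measure.volume_eq_prod, lintegral_prod _ (by fun_prop),
    ← lintegral_const_mul _ (Measurable.lintegral_prod_right (by fun_prop))]
  refine lintegral_mono fun τ => ?_
  rw [← lintegral_const_mul _ (by fun_prop)]
  refine lintegral_mono fun ξ => ?_
  rw [← sq_weightedFT, ← mul_pow]
  gcongr
  exact hle _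

lemma eLpNorm_weightedFT (hu : Measurable (weightedFT a σ s b u)) :
    eLpNorm (weightedFT a σ s b u) 2 volume = XNorm a σ s b u := by
  simp_rw [XNorm, ← sq_weightedFT]
  rw [← lintegral_prod (fun z => weightedFT a σ s b u z ^ 2) (by fun_prop),
    ← Measure.volume_eq_prod, ← sq_eLpNorm_two, ← ENNReal.rpow_two, ← ENNReal.rpow_mul]
  norm_num

lemma exists_weightedFT_mul_deriv_le {a₁ a₂ s b δ : ℝ} (ha₁ : a₁ ≠ 0)
    (hratio : a₂ / a₁ < 0 ∨ 4 < a₂ / a₁) (hδ : 0 ≤ δ) (hδ' : δ ≤ 1 / 4) (hs : 3 * δ ≤ s + 3 / 4)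
    (hb : 1 / 2 - δ ≤ b) :
    ∃ C > 0, ∀ σ ≥ 0, ∀ e ≤ -(1 / 2 - δ), ∀ (f g : SchwartzMap (ℝ × ℝ) ℂ) (z : ℝ × ℝ),
      weightedFT a₂ σ s e (fun t x => f (t, x) * deriv (fun y => g (t, y)) x) z ≤
        ENNReal.ofReal C *
          multiplierConv volume (fun z p => ENNReal.ofReal (interactionKernel a₁ a₂ b z p))
            (weightedFT a₂ σ s b fun t x => f (t, x)) (weightedFT a₁ σ s b fun t x => g (t, x))
            z := by
  obtain ⟨C, hC, hle⟩ := exists_gevreyWeight_mul_abs_le ha₁ hratio hδ hδ' hs hb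
  refine ⟨C, hC, fun σ hσ e he f g z => ?_⟩
  have hweight (p : ℝ × ℝ) : ENNReal.ofReal (gevreyWeight a₂ σ s e z) * ‖p.2‖ₑ ≤
      ENNReal.ofReal C * (ENNReal.ofReal (interactionKernel a₁ a₂ b z p) *
        (ENNReal.ofReal (gevreyWeight a₂ σ s b (z - p)) *
          ENNReal.ofReal (gevreyWeight a₁ σ s b p))) := by
    rw [Real.enorm_eq_ofReal_abs, ← ENNReal.ofReal_mul (gevreyWeight_nonneg ..),
      ← ENNReal.ofReal_mul (gevreyWeight_nonneg ..),
      ← ENNReal.ofReal_mul (interactionKernel_nonneg ..), ← ENNReal.ofReal_mul hC.le]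
    exact ENNReal.ofReal_le_ofReal (hle σ hσ e he z p)
  simp only [deriv_snd_eq_lineDerivOp, multiplierConv, weightedFT]
  rw [← lintegral_const_mul' _ _ ENNReal.ofReal_ne_top]
  refine (mul_le_mul_right (enorm_FT2_mul_lineDerivOp_le f g z) _).trans ?_
  rw [← lintegral_const_mul' _ _ ENNReal.ofReal_ne_top]
  refine lintegral_mono fun p => ?_
  set F := ‖FT2 (fun t x => f (t, x)) (z - p).1 (z - p).2‖ₑ
  set G := ‖FT2 (fun t x => g (t, x)) p.1 p.2‖ₑ
  calc _ = ENNReal.ofReal (gevreyWeight a₂ σ s e z) * ‖p.2‖ₑ * (F * G) := by ring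
    _ ≤ _ := mul_le_mul_left (hweight p) _
    _ = _ := by ring

end Norms

theorem bilinear_nondiv_vu_general {a₁ a₂ s δ b : ℝ} (ha₁ : a₁ ≠ 0) (ha₂ : a₂ ≠ 0)
    (hratio : a₂ / a₁ < 0 ∨ 4 < a₂ / a₁) (hδ : 0 ≤ δ) (hδ' : δ ≤ 1 / 4) (hs : 3 * δ ≤ s + 3 / 4)
    (hb : 1 / 2 < b) :
    ∃ C : ℝ, 0 < C ∧ ∀ σ ≥ 0, ∀ b' ≤ 1 / 2 + δ, ∀ f g : SchwartzMap (ℝ × ℝ) ℂ,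
      XNorm a₂ σ s (b' - 1) (fun t x => f (t, x) * deriv (fun y => g (t, y)) x) ≤
        ENNReal.ofReal C *
          (XNorm a₂ σ s b (fun t x => f (t, x)) * XNorm a₁ σ s b (fun t x => g (t, x))) := by
  obtain ⟨C, hC, hle⟩ :=
    exists_weightedFT_mul_deriv_le ha₁ hratio hδ hδ' hs (by linarith : 1 / 2 - δ ≤ b)
  obtain ⟨K, hK, hconv⟩ := exists_eLpNorm_multiplierConv_interactionKernel_le ha₁ ha₂
    (hratio.imp_right fun h => by linarith) hb
  refine ⟨C * (K.toReal + 1), by positivity, fun σ hσ b' hb' f g => ?_⟩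
  have hf := measurable_weightedFT a₂ σ s b f
  have hg := measurable_weightedFT a₁ σ s b g
  rw [← eLpNorm_weightedFT hf, ← eLpNorm_weightedFT hg, ENNReal.ofReal_mul hC.le, mul_assoc]
  have hK' : K ≤ ENNReal.ofReal (K.toReal + 1) :=
    (ENNReal.le_ofReal_iff_toReal_le hK (by positivity)).2 (by linarith)
  calc _ ≤ ENNReal.ofReal C * _ := XNorm_le_mul_eLpNorm
        (measurable_multiplierConv (measurable_ofReal_interactionKernel a₁ a₂ b) hf hg)
        (hle σ hσ (b' - 1) (by linarith) f g)
    _ ≤ _ := mul_le_mul_right ((hconv hf hg).trans (mul_le_mul_left hK' _)) _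

/-- Bilinear estimate (3.4): for `a₁, a₂ ≠ 0` with `a₂/a₁ < 0` or `a₂/a₁ > 4`,
and `s > −3/4`, there exist `b ∈ (1/2,1)`, `ε > 0` and `C > 0` such that for
all `σ ≥ 0`, all `b' ∈ [b, b+ε)` and all Schwartz `f, g`:
`‖f·∂_x g‖_{X_{a₂}^{σ,s,b'−1}} ≤ C ‖f‖_{X_{a₂}^{σ,s,b}} ‖g‖_{X_{a₁}^{σ,s,b}}`. -/
theorem bilinear_nondiv_vu (a₁ a₂ s : ℝ) (ha₁ : a₁ ≠ 0) (ha₂ : a₂ ≠ 0)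
    (hratio : a₂ / a₁ < 0 ∨ 4 < a₂ / a₁) (hs : -(3/4) < s) :
    ∃ b ∈ Set.Ioo (1/2 : ℝ) 1, ∃ ε : ℝ, 0 < ε ∧ ∃ C : ℝ, 0 < C ∧
      ∀ σ : ℝ, 0 ≤ σ → ∀ b' ∈ Set.Ico b (b + ε),
        ∀ f g : SchwartzMap (ℝ × ℝ) ℂ,
          XNorm a₂ σ s (b' - 1) (fun t x => f (t, x) * deriv (fun y => g (t, y)) x) ≤
            ENNReal.ofReal C *
              (XNorm a₂ σ s b (fun t x => f (t, x)) * XNorm a₁ σ s b (fun t x => g (t, x))) := by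
  set δ := min (1 / 4) ((s + 3 / 4) / 3)
  have hδ : 0 < δ := lt_min (by norm_num) (by linarith)
  have hδ_quarter : δ ≤ 1 / 4 := min_le_left ..
  have hδ_s : 3 * δ ≤ s + 3 / 4 := by linarith [min_le_right (1 / 4) ((s + 3 / 4) / 3)]
  obtain ⟨C, hC, hle⟩ := bilinear_nondiv_vu_general (b := 1 / 2 + δ / 2) ha₁ ha₂ hratio hδ.le
    hδ_quarter hδ_s (by linarith)
  exact ⟨1 / 2 + δ / 2, ⟨by linarith, by linarith⟩, δ / 2, by linarith, C, hC,
    fun σ hσ b' hb' => hle σ hσ b' (by linarith [hb'.2])⟩
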